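/- Fix a ∈ ℤ and set a* = |a|+1 if |a| ≤ 1 and a* = |a| if |a| ≥ 2. Then for any f ∈ Ḣ^{a*−1}_⋄ and B > 0, there exists a constant K = K(T, ν, ‖f‖_{Ḣ^{a*−1}}, a, B) > 0 such that for all θ, θ' ∈ Ḣ^{a*}_⋄ with ‖θ‖_{Ḣ^{a*}} + ‖θ'‖_{Ḣ^{a*}} ≤ B, the Navier–Stokes solutions satisfy sup_{0≤t≤T} ‖u_θ(t) − u_{θ'}(t)‖²_{Ḣ^a} + ∫₀ᵀ ‖u_θ(t) − u_{θ'}(t)‖²_{Ḣ^{a+1}} dt ≤ K ‖θ − θ'‖²_{Ḣ^a}. -/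

import Mathlib

open MeasureTheory Set
open scoped BigOperators

noncomputable section

namespace NS2D

/-- Nonzero Fourier frequencies of the 2D torus `Ω = 𝕋²`. -/
def Freq : Type := {k : ℤ × ℤ // k ≠ 0}

/-- Squared Euclidean modulus `|k|²` of a frequency. -/
def knormSq (k : Freq) : ℝ := (k.1.1 : ℝ) ^ 2 + (k.1.2 : ℝ) ^ 2

/-- Eigenvalue `λ_k = 4π²|k|²` of the periodic Laplacian `−Δ`. -/
def lam (k : Freq) : ℝ := 4 * Real.pi ^ 2 * knormSq k

/-- A divergence-free mean-zero vector field `u ∈ Ḣ_⋄` (or, more generally, an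
element of the scale `Ḣ^α_⋄`) on the torus is represented by its Fourier
coefficients `c k` along the orthonormal basis
`e_k(x) = |k|⁻¹ (k₂, −k₁) exp(2πi k·x)` of divergence-free fields. -/
abbrev Coef : Type := Freq → ℂ

/-- Negation of a frequency. -/
def fneg (k : Freq) : Freq := ⟨-k.1, neg_ne_zero.mpr k.2⟩

/-- The conjugacy condition expressing that the coefficients `c` represent a
real-valued vector field (note `e_{−k} = − conj e_k`). -/
def IsReal (c : Coef) : Prop := ∀ k, c (fneg k) = - (starRingEnd ℂ) (c k)

/-- Squared homogeneous Sobolev norm `‖·‖²_{Ḣ^α} = Σ_k λ_k^α |c k|²`. -/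
def hSq (α : ℝ) (c : Coef) : ℝ := ∑' k, lam k ^ α * ‖c k‖ ^ 2

/-- Homogeneous Sobolev norm `‖·‖_{Ḣ^α}`. -/
def hN (α : ℝ) (c : Coef) : ℝ := Real.sqrt (hSq α c)

/-- Finiteness of the `Ḣ^α`-norm. -/
def FinH (α : ℝ) (c : Coef) : Prop := Summable fun k => lam k ^ α * ‖c k‖ ^ 2

/-- Membership in `Ḣ^α_⋄` (real-valued field with finite `Ḣ^α`-norm). -/
def MemH (α : ℝ) (c : Coef) : Prop := IsReal c ∧ FinH α c

/-- Membership in `Ḣ^∞_⋄ = C^∞(Ω)² ∩ Ḣ_⋄`: all Sobolev norms are finite. -/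
def MemHinf (c : Coef) : Prop := ∀ α : ℝ, MemH α c

/-- Real `Ḣ^α` inner product `⟨·,·⟩_{Ḣ^α}` (for real-valued fields). -/
def hInner (α : ℝ) (c d : Coef) : ℝ := ∑' k, lam k ^ α * (c k * (starRingEnd ℂ) (d k)).re

/-- The `L²` inner product. -/
def innerC (c d : Coef) : ℂ := ∑' k, c k * (starRingEnd ℂ) (d k)

/-- The unit vector `(k₂, −k₁)/|k|` spanning the divergence-free direction at
frequency `k`. -/
def evec (k : Freq) : ℝ × ℝ :=
  ((k.1.2 : ℝ) / Real.sqrt (knormSq k), -((k.1.1 : ℝ)) / Real.sqrt (knormSq k))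

/-- Euclidean dot product on `ℝ²`. -/
def dotR (a b : ℝ × ℝ) : ℝ := a.1 * b.1 + a.2 * b.2

/-- A frequency as a real vector. -/
def fvec (k : Freq) : ℝ × ℝ := ((k.1.1 : ℝ), (k.1.2 : ℝ))

/-- Fourier coefficients (along the basis `e_k`) of the Leray-projected
transport nonlinearity `B[u,v] = P[(u·∇)v]`:
`(B[u,v])^(k) · ē_k = 2πi Σ_{m+n=k, n≠0} c_m d_n (e_m·n)(e_n·e_k)`. -/
def Bc (c d : Coef) : Coef := fun k =>
  (((2 * Real.pi : ℝ) : ℂ) * Complex.I) *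
    ∑' m : Freq,
      if h : k.1 - m.1 ≠ 0 then
        c m * d ⟨k.1 - m.1, h⟩ *
          (((dotR (evec m) (fvec ⟨k.1 - m.1, h⟩) *
            dotR (evec ⟨k.1 - m.1, h⟩) (evec k) : ℝ)) : ℂ)
      else 0

/-- The Laplacian `Δ` acting on the scale: `(Δu)^(k) = −λ_k û(k)`. -/
def lapC (c : Coef) : Coef := fun k => -((lam k : ℝ) : ℂ) * c k

/-- Continuity of a trajectory `t ↦ u(t)`, `t ∈ [0,T]`, for the `Ḣ^α`-norm:
`u ∈ C([0,T], Ḣ^α_⋄)`. -/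
def ContH (α : ℝ) (T : ℝ) (u : ℝ → Coef) : Prop :=
  ∀ t ∈ Icc (0:ℝ) T, ∀ ε > 0, ∃ δ > 0, ∀ s ∈ Icc (0:ℝ) T,
    |s - t| < δ → hN α (u s - u t) < ε

/-- Membership `u ∈ L²([0,T], Ḣ^α_⋄)`. -/
def MemL2H (α : ℝ) (T : ℝ) (u : ℝ → Coef) : Prop :=
  (∀ t ∈ Ioc (0:ℝ) T, MemH α (u t)) ∧
    IntegrableOn (fun t => hSq α (u t)) (Ioc 0 T)

/-- `u` is a strong solution on `[0,T]` of the (Leray-projected) periodic 2D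
Navier–Stokes equations `du/dt + νAu + B[u,u] = f`, `u(0) = θ`, posed in `Ḣ_⋄`:
the Fourier coefficients satisfy the corresponding system of ODEs on `(0,T]`,
the trajectory is continuous into `Ḣ¹_⋄` (in particular at `t = 0`), and lies
in `L²([0,T], Ḣ²_⋄)`. -/
structure IsNSSol (ν : ℝ) (f : Coef) (T : ℝ) (θ : Coef) (u : ℝ → Coef) : Prop where
  init : u 0 = θ
  real : ∀ t ∈ Icc (0:ℝ) T, IsReal (u t)
  deriv : ∀ (k : Freq), ∀ t ∈ Ioc (0:ℝ) T,
    HasDerivAt (fun s => u s k)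
      (f k - ((ν * lam k : ℝ) : ℂ) * u t k - Bc (u t) (u t) k) t
  contH1 : ContH 1 T u
  memL2H2 : MemL2H 2 T u

/-- `U` solves the linear parabolic equation
`dU/dt − νΔU + B[u₀, U] + B[U, u₁] = g`, `U(0) = ξ`, on `[0,T]`. -/
structure IsLinPSol (ν : ℝ) (u₀ u₁ : ℝ → Coef) (g : ℝ → Coef) (T : ℝ) (ξ : Coef)
    (U : ℝ → Coef) : Prop where
  init : U 0 = ξ
  real : ∀ t ∈ Icc (0:ℝ) T, IsReal (U t)
  deriv : ∀ (k : Freq), ∀ t ∈ Ioc (0:ℝ) T,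
    HasDerivAt (fun s => U s k)
      (g t k - ((ν * lam k : ℝ) : ℂ) * U t k - Bc (u₀ t) (U t) k - Bc (U t) (u₁ t) k) t

/-- `U = 𝕀_θ[ξ]` solves the linearisation of Navier–Stokes along the
trajectory `u₀`: `dU/dt − νΔU + B[u₀,U] + B[U,u₀] = 0`, `U(0) = ξ`. -/
def IsLinSol (ν : ℝ) (u₀ : ℝ → Coef) (T : ℝ) (ξ : Coef) (U : ℝ → Coef) : Prop :=
  IsLinPSol ν u₀ u₀ (fun _ => 0) T ξ U

/-- The heat semigroup `S_t = e^{νtΔ}` on the scale `Ḣ^α_⋄`. -/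
def heatS (ν t : ℝ) (c : Coef) : Coef := fun k =>
  ((Real.exp (-(ν * lam k * t)) : ℝ) : ℂ) * c k

/-- Duhamel representation of the solution of the periodic heat equation
`du/dt − νΔu = g`, `u(0) = h`. -/
def heatSol (ν : ℝ) (g : ℝ → Coef) (h : Coef) : ℝ → Coef := fun t k =>
  ((Real.exp (-(ν * lam k * t)) : ℝ) : ℂ) *
    (h k + ∫ s in (0:ℝ)..t, ((Real.exp (ν * lam k * s) : ℝ) : ℂ) * g s k)

/-- Real-linearity of a map on the coefficient space. -/
def IsLinMap (Λ : Coef → Coef) : Prop :=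
  (∀ c d, Λ (c + d) = Λ c + Λ d) ∧ ∀ (r : ℝ) (c : Coef), Λ (r • c) = r • Λ c

/-- `Λ` defines a compact (linear) operator `Ḣ^α_⋄ → Ḣ^β_⋄`: it is linear,
maps `Ḣ^α_⋄` into `Ḣ^β_⋄`, and the image of the `Ḣ^α`-unit ball is totally
bounded for the `Ḣ^β`-norm. -/
def IsCompactOp (α β : ℝ) (Λ : Coef → Coef) : Prop :=
  IsLinMap Λ ∧ (∀ c, MemH α c → MemH β (Λ c)) ∧
    ∀ ε > 0, ∃ S : Finset Coef, ∀ c, MemH α c → hN α c ≤ 1 →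
      ∃ s ∈ S, hN β (Λ c - s) < ε

/-- The index `a* = |a|+1` if `|a| ≤ 1`, `a* = |a|` if `|a| ≥ 2`. -/
def astar (a : ℤ) : ℤ := if |a| ≤ 1 then |a| + 1 else |a|

/-- `i`-th component of the unit vector `evec k`. -/
def evecC (i : Fin 2) (k : Freq) : ℝ := if i = 0 then (evec k).1 else (evec k).2

/-- Fourier coefficients (over all of `ℤ²`) of the scalar component `u_i` of a
divergence-free field with coefficients `c`. -/
def compCoef (i : Fin 2) (c : Coef) : ℤ × ℤ → ℂ := fun n =>
  if h : n ≠ 0 then c ⟨n, h⟩ * ((evecC i ⟨n, h⟩ : ℝ) : ℂ) else 0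

/-- Convolution: Fourier coefficients of a pointwise product of two scalar
functions. -/
def convC (F G : ℤ × ℤ → ℂ) : ℤ × ℤ → ℂ := fun n => ∑' m : ℤ × ℤ, F m * G (n - m)

/-- Squared homogeneous Sobolev norm of a scalar function given by its Fourier
coefficients over `ℤ²`. -/
def hSqScalar (α : ℝ) (F : ℤ × ℤ → ℂ) : ℝ := ∑' k : Freq, lam k ^ α * ‖F k.1‖ ^ 2

/-- `‖u vᵀ‖²_{Ḣ^α} = Σ_{i,j=1}^2 ‖u_i v_j‖²_{Ḣ^α}`. -/
def hSqMat (α : ℝ) (c d : Coef) : ℝ :=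
  ∑ i : Fin 2, ∑ j : Fin 2, hSqScalar α (convC (compCoef i c) (compCoef j d))

/-- The character `exp(2πi k·x)`. -/
def efun (k : Freq) (x : ℝ × ℝ) : ℂ :=
  Complex.exp ((((2 * Real.pi : ℝ)) : ℂ) * Complex.I *
    ((k.1.1 : ℂ) * (x.1 : ℂ) + (k.1.2 : ℂ) * (x.2 : ℂ)))

/-- Pointwise evaluation of the `i`-th component of the field. -/
def evalComp (i : Fin 2) (c : Coef) (x : ℝ × ℝ) : ℂ :=
  ∑' k, c k * ((evecC i k : ℝ) : ℂ) * efun k x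

/-- Supremum norm (`C⁰`-norm) of the field. -/
def c0N (c : Coef) : ℝ := ⨆ x : ℝ × ℝ, max ‖evalComp 0 c x‖ ‖evalComp 1 c x‖

/-- The partial derivative `∂_j` acting on divergence-free fields. -/
def pderiv (j : Fin 2) (c : Coef) : Coef := fun k =>
  (((2 * Real.pi : ℝ) : ℂ) * Complex.I) *
    (if j = 0 then ((k.1.1 : ℤ) : ℂ) else ((k.1.2 : ℤ) : ℂ)) * c k

/-- `C¹`-norm of the field. -/
def c1N (c : Coef) : ℝ := c0N c + c0N (pderiv 0 c) + c0N (pderiv 1 c)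

/-- Norm of the multiplier space `B^ℓ`: `C^ℓ(Ω)²` for `ℓ ≤ 1` and `Ḣ^ℓ` for
`ℓ ≥ 2`. -/
def bN (ℓ : ℕ) (c : Coef) : ℝ :=
  if ℓ = 0 then c0N c else if ℓ = 1 then c1N c else hN (ℓ : ℝ) c

end NS2D

namespace NS2D

open scoped ENNReal

/-!
In dimension two the convective term vanishes in the enstrophy balance, `⟨B[u,u], Au⟩ = 0`: in
terms of the stream function this follows from relabelling Fourier triads. Hence `u` is bounded in
`L^∞([0,T], Ḣ¹) ∩ L²([0,T], Ḣ²)` by the data alone. The estimate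
`‖B[u,u]‖²_{Ḣ^{s-1}} ≲ ‖u‖²_{Ḣ²} ‖u‖²_{Ḣ^s}` and Grönwall's inequality then propagate the `Ḣ^s`
norm for every `s ≥ 1` at which the data are regular. The `Ḣ^s` norm is not known to be finite a
priori, so the argument is run with weights which agree with `λ^s` at low frequency, grow linearly
at high frequency, and satisfy a doubling condition uniformly in the truncation.

The difference `w` of two solutions `u`, `u'` solves a heat equation with forcing
`B[u',u'] - B[u,u]`, which incompressibility lets one bound in `Ḣ^{a-1}` by the `Ḣ^a` norm of
products of `w` with `u` and `u'`, hence by `‖w‖_{Ḣ^a} (‖u‖_{Ḣ^{s+1}} + ‖u'‖_{Ḣ^{s+1}})` when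
`s = a*`. As `‖u‖²_{Ḣ^{s+1}} + ‖u'‖²_{Ḣ^{s+1}}` is integrable in time, Grönwall's inequality
concludes.

All norms are weighted `ℓ²` sums of Fourier coefficients, and every product estimate is an
inequality for a convolution on `ℤ²` with values in `[0, ∞]`.
-/

section Gronwall

open Filter Topology

lemma absolutelyContinuousOnInterval_comp_of_lipschitzOnWith {X Y : Type*} [PseudoMetricSpace X]
    [PseudoMetricSpace Y] {K : NNReal} {g : X → Y} {f : ℝ → X} {a b : ℝ}
    (hg : LipschitzOnWith K g (f '' uIcc a b)) (hf : AbsolutelyContinuousOnInterval f a b) :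
    AbsolutelyContinuousOnInterval (g ∘ f) a b := by
  refine squeeze_zero' (Eventually.of_forall fun _ => Finset.sum_nonneg fun _ _ => dist_nonneg)
    ?_ (by simpa using Tendsto.const_mul (K : ℝ) hf)
  filter_upwards [mem_inf_of_right (mem_principal_self _)] with E hE
  rw [Finset.mul_sum]
  exact Finset.sum_le_sum fun i hi => hg.dist_le_mul _ (mem_image_of_mem f (hE.1 i hi).1) _
    (mem_image_of_mem f (hE.1 i hi).2)

lemma absolutelyContinuousOnInterval_exp {f : ℝ → ℝ} {a b : ℝ}
    (hf : AbsolutelyContinuousOnInterval f a b) :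
    AbsolutelyContinuousOnInterval (fun t => Real.exp (f t)) a b := by
  obtain ⟨C, hC⟩ := hf.exists_bound
  obtain ⟨K, hK⟩ := (Real.contDiff_exp (n := 1)).contDiffOn.exists_lipschitzOnWith
    (one_ne_zero) (convex_Icc (-C) C) isCompact_Icc
  refine absolutelyContinuousOnInterval_comp_of_lipschitzOnWith (g := Real.exp) (hK.mono ?_) hf
  rintro _ ⟨t, ht, rfl⟩
  exact abs_le.1 (hC t ht)

lemma le_mul_exp_integral_of_deriv_le {a b : ℝ} (hab : a ≤ b) {α F : ℝ → ℝ}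
    (hα : IntervalIntegrable α volume a b) (hF : AbsolutelyContinuousOnInterval F a b)
    (h : ∀ᵐ t, t ∈ Icc a b → deriv F t ≤ α t * F t) :
    F b ≤ F a * Real.exp (∫ s in a..b, α s) := by
  set Φ : ℝ → ℝ := fun t => ∫ s in a..t, α s with hΦ
  have hexp : AbsolutelyContinuousOnInterval (fun t => Real.exp (-Φ t)) a b :=
    absolutelyContinuousOnInterval_exp
      (hα.absolutelyContinuousOnInterval_intervalIntegral left_mem_uIcc).fun_neg
  have hderiv : ∀ᵐ t, t ∈ Icc a b → deriv (fun t => F t * Real.exp (-Φ t)) t ≤ 0 := by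
    rw [← uIcc_of_le hab] at h ⊢
    filter_upwards [h, hα.ae_hasDerivAt_integral, hF.ae_differentiableAt] with t ht hΦ' hF' htm
    have hprod := (hF' htm).hasDerivAt.fun_mul (hΦ' htm a left_mem_uIcc).fun_neg.exp
    rw [hprod.deriv]
    have := mul_le_mul_of_nonneg_right (ht htm) (Real.exp_pos (-Φ t)).le
    linarith
  have hdecr : F b * Real.exp (-Φ b) ≤ F a := by
    have hint : ∫ t in a..b, deriv (fun t => F t * Real.exp (-Φ t)) t ≤ 0 := by
      rw [intervalIntegral.integral_of_le hab]
      exact setIntegral_nonpos_ae measurableSet_Ioc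
        (hderiv.mono fun t ht htm => ht (Ioc_subset_Icc_self htm))
    rw [(hF.fun_mul hexp).integral_deriv_eq_sub] at hint
    simpa [hΦ] using hint
  calc F b = F b * Real.exp (-Φ b) * Real.exp (Φ b) := by
        rw [mul_assoc, ← Real.exp_add, neg_add_cancel, Real.exp_zero, mul_one]
    _ ≤ F a * Real.exp (Φ b) := by gcongr

lemma add_integral_le_mul_exp_integral_of_le_add_integral {a b A : ℝ} (hab : a ≤ b)
    {α E : ℝ → ℝ} (hα : IntervalIntegrable α volume a b)
    (hαE : IntervalIntegrable (fun t => α t * E t) volume a b) (hα0 : ∀ t ∈ Icc a b, 0 ≤ α t)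
    (h : ∀ t ∈ Icc a b, E t ≤ A + ∫ s in a..t, α s * E s) :
    A + ∫ s in a..b, α s * E s ≤ A * Real.exp (∫ s in a..b, α s) := by
  set F : ℝ → ℝ := fun t => A + ∫ s in a..t, α s * E s with hF
  have hF_ac : AbsolutelyContinuousOnInterval F a b :=
    (LipschitzWith.const A).lipschitzOnWith.absolutelyContinuousOnInterval.fun_add
      (hαE.absolutelyContinuousOnInterval_intervalIntegral left_mem_uIcc)
  have hderiv : ∀ᵐ t, t ∈ Icc a b → deriv F t ≤ α t * F t := by
    filter_upwards [hαE.ae_hasDerivAt_integral] with t hF' ht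
    rw [((hF' (uIcc_of_le hab ▸ ht) a left_mem_uIcc).const_add A).deriv]
    exact mul_le_mul_of_nonneg_left (h t ht) (hα0 t ht)
  simpa [hF] using le_mul_exp_integral_of_deriv_le hab hα hF_ac hderiv

end Gronwall

section Convolution

lemma two_mul_le_sq_add_sq (x y : ℝ≥0∞) : 2 * (x * y) ≤ x ^ 2 + y ^ 2 := by
  by_cases hx : x = ⊤
  · simp [hx]
  by_cases hy : y = ⊤
  · simp [hy]
  lift x to NNReal using hx
  lift y to NNReal using hy
  exact_mod_cast mul_assoc 2 x y ▸ two_mul_le_add_sq x y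

lemma add_sq_le_two_mul (x y : ℝ≥0∞) : (x + y) ^ 2 ≤ 2 * (x ^ 2 + y ^ 2) := by
  calc (x + y) ^ 2 = x ^ 2 + y ^ 2 + 2 * (x * y) := by ring
    _ ≤ x ^ 2 + y ^ 2 + (x ^ 2 + y ^ 2) := by gcongr; exact two_mul_le_sq_add_sq x y
    _ = 2 * (x ^ 2 + y ^ 2) := by ring

lemma tsum_mul_sq_le {ι : Type*} (x y : ι → ℝ≥0∞) :
    (∑' i, x i * y i) ^ 2 ≤ (∑' i, x i ^ 2) * ∑' i, y i ^ 2 := by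
  let _ : MeasurableSpace ι := ⊤
  have h := ENNReal.lintegral_mul_le_Lp_mul_Lq Measure.count Real.HolderConjugate.two_two
    (measurable_from_top (f := x)).aemeasurable (measurable_from_top (f := y)).aemeasurable
  simp only [lintegral_count' measurable_from_top, Pi.mul_apply, ENNReal.rpow_two] at h
  have hsq : ∀ z : ℝ≥0∞, (z ^ (1 / 2 : ℝ)) ^ 2 = z := fun z => by
    rw [← ENNReal.rpow_mul_natCast]; norm_num
  calc _ ≤ _ := pow_le_pow_left' h 2
    _ = _ := by rw [mul_pow, hsq, hsq]

variable {G : Type*} [AddCommGroup G]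

/-- The discrete convolution `(X * Y)(k) = ∑ₘ X(m) Y(k - m)`, with values in `ℝ≥0∞` so that no
summability has to be carried along. -/
def conv (X Y : G → ℝ≥0∞) (k : G) : ℝ≥0∞ := ∑' m, X m * Y (k - m)

lemma conv_comm (X Y : G → ℝ≥0∞) (k : G) : conv X Y k = conv Y X k := by
  unfold conv
  rw [← (Equiv.subLeft k).tsum_eq]
  exact tsum_congr fun m => by simp [mul_comm]

lemma conv_sq_le (X Y : G → ℝ≥0∞) (k : G) :
    conv X Y k ^ 2 ≤ (∑' m, X m ^ 2) * ∑' m, Y m ^ 2 :=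
  (tsum_mul_sq_le _ _).trans_eq <| congrArg _ ((Equiv.subLeft k).tsum_eq fun m => Y m ^ 2)

lemma tsum_conv_sq_le (X Y : G → ℝ≥0∞) :
    ∑' k, conv X Y k ^ 2 ≤ (∑' m, X m) ^ 2 * ∑' m, Y m ^ 2 := by
  have hsqrt : ∀ m, (X m ^ (1 / 2 : ℝ)) ^ 2 = X m := fun m => by
    rw [← ENNReal.rpow_mul_natCast]; norm_num
  have hpoint : ∀ k, conv X Y k ^ 2 ≤ (∑' m, X m) * ∑' m, X m * Y (k - m) ^ 2 := fun k => by
    have h := tsum_mul_sq_le (fun m => X m ^ (1 / 2 : ℝ)) fun m => X m ^ (1 / 2 : ℝ) * Y (k - m)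
    simpa only [conv, ← mul_assoc, ← sq, mul_pow, hsqrt] using h
  calc ∑' k, conv X Y k ^ 2 ≤ ∑' k, (∑' m, X m) * ∑' m, X m * Y (k - m) ^ 2 :=
        ENNReal.tsum_le_tsum hpoint
    _ = (∑' m, X m) * ∑' m, X m * ∑' k, Y (k - m) ^ 2 := by
        rw [ENNReal.tsum_mul_left, ENNReal.tsum_comm]
        simp only [ENNReal.tsum_mul_left]
    _ = (∑' m, X m) * ∑' m, X m * ∑' k, Y k ^ 2 := by
        congr! 4 with m
        exact (Equiv.subRight m).tsum_eq fun k => Y k ^ 2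
    _ = (∑' m, X m) ^ 2 * ∑' m, Y m ^ 2 := by rw [ENNReal.tsum_mul_right]; ring

end Convolution

section Lattice

instance : Countable Freq := by unfold Freq; infer_instance

/-- The eigenvalue `λ_n = 4π²|n|²` on the whole lattice `ℤ²`, so that convolutions can be taken
over a group; it vanishes at the origin. -/
def lamExt (n : ℤ × ℤ) : ℝ := 4 * Real.pi ^ 2 * ((n.1 : ℝ) ^ 2 + (n.2 : ℝ) ^ 2)

lemma lamExt_freq (k : Freq) : lamExt k.1 = lam k := rfl

lemma lamExt_nonneg (n : ℤ × ℤ) : 0 ≤ lamExt n := by unfold lamExt; positivity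

lemma one_le_knormSq (k : Freq) : 1 ≤ knormSq k := by
  have hne : k.1.1 ^ 2 + k.1.2 ^ 2 ≠ 0 := fun h => k.2 <| by
    ext
    · exact pow_eq_zero_iff two_ne_zero |>.1 (by nlinarith [sq_nonneg k.1.1, sq_nonneg k.1.2])
    · exact pow_eq_zero_iff two_ne_zero |>.1 (by nlinarith [sq_nonneg k.1.1, sq_nonneg k.1.2])
  have hpos : 1 ≤ k.1.1 ^ 2 + k.1.2 ^ 2 :=
    lt_of_le_of_ne (add_nonneg (sq_nonneg _) (sq_nonneg _)) hne.symm
  unfold knormSq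
  exact_mod_cast hpos

lemma knormSq_pos (k : Freq) : 0 < knormSq k := one_pos.trans_le (one_le_knormSq k)

lemma knormSq_le_lam (k : Freq) : knormSq k ≤ lam k :=
  le_mul_of_one_le_left (knormSq_pos k).le (by nlinarith [Real.pi_gt_three])

lemma one_le_lam (k : Freq) : 1 ≤ lam k := (one_le_knormSq k).trans (knormSq_le_lam k)

lemma lam_pos (k : Freq) : 0 < lam k := one_pos.trans_le (one_le_lam k)

lemma lam_rpow_pos (k : Freq) (p : ℝ) : 0 < lam k ^ p := Real.rpow_pos_of_pos (lam_pos k) p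

lemma sqrt_lam (k : Freq) : √(lam k) = 2 * Real.pi * √(knormSq k) := by
  rw [lam, show 4 * Real.pi ^ 2 * knormSq k = (2 * Real.pi) ^ 2 * knormSq k by ring,
    Real.sqrt_mul (by positivity), Real.sqrt_sq (by positivity)]

lemma lamExt_add_le (m n : ℤ × ℤ) : lamExt (m + n) ≤ 2 * (lamExt m + lamExt n) := by
  simp only [lamExt, Prod.fst_add, Prod.snd_add, Int.cast_add]
  have := mul_nonneg (sq_nonneg Real.pi) (sq_nonneg ((m.1 : ℝ) - n.1))
  have := mul_nonneg (sq_nonneg Real.pi) (sq_nonneg ((m.2 : ℝ) - n.2))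
  linarith

lemma lam_le_four_mul_max {k m n : Freq} (h : k.1 = m.1 + n.1) :
    lam k ≤ 4 * max (lam m) (lam n) := by
  have hadd := lamExt_add_le m.1 n.1
  rw [← h, lamExt_freq, lamExt_freq, lamExt_freq] at hadd
  linarith [le_max_left (lam m) (lam n), le_max_right (lam m) (lam n)]

lemma lam_fneg (k : Freq) : lam (fneg k) = lam k := by simp [lam, knormSq, fneg]

lemma lam_le_four_mul_max' {k m n : Freq} (h : k.1 = m.1 + n.1) :
    lam n ≤ 4 * max (lam m) (lam k) :=
  lam_fneg m ▸ lam_le_four_mul_max (k := n) (m := fneg m) (n := k) (by simp [fneg, h])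

/-- The constant `∑ₙ λ_n⁻²` of the embedding `Ḣ² ⊂ ℓ¹`. -/
def invLamSqSum : ℝ≥0∞ := ∑' k : Freq, ENNReal.ofReal (lam k)⁻¹ ^ 2

lemma summable_inv_one_add_sq : Summable fun a : ℤ => (1 + (a : ℝ) ^ 2)⁻¹ := by
  refine Summable.of_norm_bounded_eventually (Real.summable_one_div_int_pow.2 one_lt_two) ?_
  filter_upwards [(Set.finite_singleton (0 : ℤ)).compl_mem_cofinite] with a ha
  have ha' : (a : ℝ) ≠ 0 := Int.cast_ne_zero.2 ha
  rw [Real.norm_of_nonneg (by positivity), one_div]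
  exact inv_anti₀ (by positivity) (by linarith)

lemma invLamSqSum_ne_top : invLamSqSum ≠ ⊤ := by
  have hprod : Summable fun n : ℤ × ℤ => 4 * ((1 + (n.1 : ℝ) ^ 2)⁻¹ * (1 + (n.2 : ℝ) ^ 2)⁻¹) :=
    (summable_inv_one_add_sq.mul_of_nonneg summable_inv_one_add_sq
      (fun _ => by positivity) fun _ => by positivity).mul_left 4
  refine ne_top_of_le_ne_top (hprod.comp_injective Subtype.val_injective).tsum_ofReal_ne_top
    (ENNReal.tsum_le_tsum fun k : Freq => ?_)
  rw [← ENNReal.ofReal_pow (inv_nonneg.2 (lam_pos k).le)]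
  refine ENNReal.ofReal_le_ofReal ?_
  -- `(1 + k₁²)(1 + k₂²) ≤ (1 + |k|²)² ≤ 4 λ_k²`
  have hsq : (1 + (k.1.1 : ℝ) ^ 2) * (1 + (k.1.2 : ℝ) ^ 2) ≤ 4 * lam k ^ 2 := by
    have hle : 1 + knormSq k ≤ 2 * lam k := by linarith [one_le_lam k, knormSq_le_lam k]
    calc (1 + (k.1.1 : ℝ) ^ 2) * (1 + (k.1.2 : ℝ) ^ 2)
        ≤ (1 + knormSq k) * (1 + knormSq k) := by
          unfold knormSq
          gcongr <;> nlinarith [sq_nonneg (k.1.1 : ℝ), sq_nonneg (k.1.2 : ℝ)]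
      _ ≤ 2 * lam k * (2 * lam k) :=
          mul_self_le_mul_self (by linarith [knormSq_pos k]) hle
      _ = 4 * lam k ^ 2 := by ring
  have := lam_pos k
  change (lam k)⁻¹ ^ 2 ≤ 4 * ((1 + (k.1.1 : ℝ) ^ 2)⁻¹ * (1 + (k.1.2 : ℝ) ^ 2)⁻¹)
  rw [← mul_inv, inv_pow, ← div_eq_mul_inv, inv_eq_one_div,
    div_le_div_iff₀ (by positivity) (by positivity)]
  linarith

end Lattice

section SobolevNorms

/-- The weighted square sum `∑ₖ W_k |c_k|²` with values in `ℝ≥0∞`, which makes sense without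
any summability assumption. -/
def ewSq (W : Freq → ℝ) (c : Coef) : ℝ≥0∞ := ∑' k, ENNReal.ofReal (W k * ‖c k‖ ^ 2)

/-- The squared Sobolev norm `‖c‖²_{Ḣ^α}` with values in `ℝ≥0∞`; it is `⊤` where the real-valued
`hSq` takes the junk value `0`. -/
def ehSq (α : ℝ) (c : Coef) : ℝ≥0∞ := ewSq (fun k => lam k ^ α) c

lemma rpow_lam_mul_norm_sq_nonneg (α : ℝ) (c : Coef) (k : Freq) : 0 ≤ lam k ^ α * ‖c k‖ ^ 2 :=
  mul_nonneg (lam_rpow_pos k α).le (sq_nonneg _)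

lemma hSq_eq_toReal (α : ℝ) (c : Coef) : hSq α c = (ehSq α c).toReal := by
  rw [ehSq, ewSq, ENNReal.tsum_toReal_eq fun _ => ENNReal.ofReal_ne_top]
  exact tsum_congr fun k => (ENNReal.toReal_ofReal (rpow_lam_mul_norm_sq_nonneg α c k)).symm

lemma hSq_nonneg (α : ℝ) (c : Coef) : 0 ≤ hSq α c := hSq_eq_toReal α c ▸ ENNReal.toReal_nonneg

lemma hN_sq (α : ℝ) (c : Coef) : hN α c ^ 2 = hSq α c := Real.sq_sqrt (hSq_nonneg α c)

lemma finH_iff_ehSq_ne_top {α : ℝ} {c : Coef} : FinH α c ↔ ehSq α c ≠ ⊤ :=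
  ⟨fun h => h.tsum_ofReal_ne_top, fun h => (ENNReal.summable_toReal h).congr fun k =>
    ENNReal.toReal_ofReal (rpow_lam_mul_norm_sq_nonneg α c k)⟩

lemma ofReal_hSq {α : ℝ} {c : Coef} (h : FinH α c) : ENNReal.ofReal (hSq α c) = ehSq α c := by
  rw [hSq_eq_toReal, ENNReal.ofReal_toReal (finH_iff_ehSq_ne_top.1 h)]

lemma ewSq_mono {W W' : Freq → ℝ} (h : ∀ k, W k ≤ W' k) (c : Coef) : ewSq W c ≤ ewSq W' c :=
  ENNReal.tsum_le_tsum fun k => ENNReal.ofReal_le_ofReal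
    (mul_le_mul_of_nonneg_right (h k) (sq_nonneg _))

lemma ehSq_mono {α β : ℝ} (h : α ≤ β) (c : Coef) : ehSq α c ≤ ehSq β c :=
  ewSq_mono (fun k => Real.rpow_le_rpow_of_exponent_le (one_le_lam k) h) c

lemma FinH.mono {α β : ℝ} {c : Coef} (hc : FinH β c) (h : α ≤ β) : FinH α c :=
  finH_iff_ehSq_ne_top.2 (ne_top_of_le_ne_top (finH_iff_ehSq_ne_top.1 hc) (ehSq_mono h c))

lemma hSq_mono {α β : ℝ} {c : Coef} (h : α ≤ β) (hc : FinH β c) : hSq α c ≤ hSq β c := by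
  simp only [hSq_eq_toReal]
  exact ENNReal.toReal_mono (finH_iff_ehSq_ne_top.1 hc) (ehSq_mono h c)

lemma ewSq_const_mul {x : ℝ} (hx : 0 ≤ x) (W : Freq → ℝ) (c : Coef) :
    ewSq (fun k => x * W k) c = ENNReal.ofReal x * ewSq W c := by
  simp only [ewSq, mul_assoc, ENNReal.ofReal_mul hx, ENNReal.tsum_mul_left]

lemma ewSq_sub_le {W : Freq → ℝ} (hW : ∀ k, 0 ≤ W k) (c d : Coef) :
    ewSq W (c - d) ≤ 2 * (ewSq W c + ewSq W d) := by
  unfold ewSq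
  rw [← ENNReal.tsum_add, ← ENNReal.tsum_mul_left]
  refine ENNReal.tsum_le_tsum fun k => ?_
  have htwo : (2 : ℝ≥0∞) = ENNReal.ofReal 2 := by simp
  have hWk := hW k
  rw [← ENNReal.ofReal_add (by positivity) (by positivity), htwo,
    ← ENNReal.ofReal_mul zero_le_two, ← mul_add, mul_left_comm]
  refine ENNReal.ofReal_le_ofReal (mul_le_mul_of_nonneg_left ?_ hWk)
  calc ‖(c - d) k‖ ^ 2 ≤ (‖c k‖ + ‖d k‖) ^ 2 := by gcongr; exact norm_sub_le _ _
    _ ≤ 2 * (‖c k‖ ^ 2 + ‖d k‖ ^ 2) := by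
      linarith [two_mul_le_add_sq ‖c k‖ ‖d k‖, add_sq ‖c k‖ ‖d k‖]

lemma FinH.sub {α : ℝ} {c d : Coef} (hc : FinH α c) (hd : FinH α d) : FinH α (c - d) :=
  finH_iff_ehSq_ne_top.2 <| ne_top_of_le_ne_top
    (ENNReal.mul_ne_top ENNReal.ofNat_ne_top
      (ENNReal.add_ne_top.2 ⟨finH_iff_ehSq_ne_top.1 hc, finH_iff_ehSq_ne_top.1 hd⟩))
    (ewSq_sub_le (fun k => (lam_rpow_pos k α).le) c d)

/-- The coefficients extended by `0` to the mean-zero mode, as a function on the group `ℤ²`. -/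
def zeroExt (c : Coef) (n : ℤ × ℤ) : ℂ := if h : n ≠ 0 then c ⟨n, h⟩ else 0

lemma zeroExt_zero (c : Coef) : zeroExt c 0 = 0 := by simp [zeroExt]

lemma zeroExt_of_ne (c : Coef) {n : ℤ × ℤ} (h : n ≠ 0) : zeroExt c n = c ⟨n, h⟩ := by
  simp [zeroExt, h]

lemma zeroExt_freq (c : Coef) (k : Freq) : zeroExt c k.1 = c k := zeroExt_of_ne c k.2

/-- The modulus sequence `n ↦ |c_n|` on the lattice. -/
def emod (c : Coef) (n : ℤ × ℤ) : ℝ≥0∞ := ‖zeroExt c n‖ₑ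

/-- The weighted modulus sequence `n ↦ v_n |c_n|` on the lattice. -/
def wmod (v : ℤ × ℤ → ℝ) (c : Coef) (n : ℤ × ℤ) : ℝ≥0∞ := ENNReal.ofReal (v n) * emod c n

lemma emod_zero (c : Coef) : emod c 0 = 0 := by simp [emod, zeroExt_zero]

lemma wmod_one (c : Coef) : wmod (fun _ => 1) c = emod c := by ext n; simp [wmod]

lemma wmod_rpow_zero (c : Coef) : wmod (fun n => lamExt n ^ (0 : ℝ)) c = emod c := by
  simpa only [Real.rpow_zero] using wmod_one c

lemma tsum_freq_le (g : ℤ × ℤ → ℝ≥0∞) : ∑' k : Freq, g k.1 ≤ ∑' n, g n :=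
  ENNReal.tsum_comp_le_tsum_of_injective Subtype.val_injective g

lemma tsum_freq_eq {M : Type*} [AddCommMonoid M] [TopologicalSpace M] {g : ℤ × ℤ → M}
    (h : g 0 = 0) : ∑' k : Freq, g k.1 = ∑' n, g n :=
  Function.Injective.tsum_eq (g := fun k : Freq => k.1) Subtype.val_injective fun n hn =>
    ⟨⟨n, fun h0 => hn (h0 ▸ h)⟩, rfl⟩

lemma ofReal_mul_enorm_sq {x : ℝ} (hx : 0 ≤ x) (z : ℂ) :
    (ENNReal.ofReal x * ‖z‖ₑ) ^ 2 = ENNReal.ofReal (x ^ 2 * ‖z‖ ^ 2) := by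
  rw [← ofReal_norm, ← ENNReal.ofReal_mul hx, ← ENNReal.ofReal_pow (by positivity), mul_pow]

lemma tsum_wmod_sq {v : ℤ × ℤ → ℝ} (hv : ∀ n, 0 ≤ v n) (c : Coef) :
    ∑' n, wmod v c n ^ 2 = ewSq (fun k => v k.1 ^ 2) c := by
  rw [← tsum_freq_eq (by simp [wmod, emod_zero])]
  exact tsum_congr fun k => by rw [wmod, emod, zeroExt_freq, ofReal_mul_enorm_sq (hv _)]

lemma tsum_wmod_rpow_sq (p : ℝ) (c : Coef) :
    ∑' n, wmod (fun n => lamExt n ^ p) c n ^ 2 = ehSq (2 * p) c := by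
  rw [tsum_wmod_sq fun n => Real.rpow_nonneg (lamExt_nonneg n) p]
  refine congrArg (ewSq · c) (funext fun k => ?_)
  rw [lamExt_freq, ← Real.rpow_mul_natCast (lam_pos k).le, Nat.cast_two, mul_comm]

lemma tsum_wmod_rpow_le (p : ℝ) (c : Coef) :
    (∑' n, wmod (fun n => lamExt n ^ p) c n) ^ 2 ≤ invLamSqSum * ehSq (2 * p + 2) c := by
  have hsplit : ∀ k : Freq, wmod (fun n => lamExt n ^ p) c k.1 =
      ENNReal.ofReal (lam k)⁻¹ * wmod (fun n => lamExt n ^ (p + 1)) c k.1 := fun k => by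
    have := lam_pos k
    rw [wmod, wmod, ← mul_assoc, ← ENNReal.ofReal_mul (by positivity), lamExt_freq,
      Real.rpow_add_one (by positivity), mul_comm (lam k)⁻¹, mul_inv_cancel_right₀ (by positivity)]
  calc (∑' n, wmod (fun n => lamExt n ^ p) c n) ^ 2
      = (∑' k : Freq, ENNReal.ofReal (lam k)⁻¹ * wmod (fun n => lamExt n ^ (p + 1)) c k.1) ^ 2 := by
        rw [← tsum_freq_eq (by simp [wmod, emod_zero]), tsum_congr hsplit]
    _ ≤ invLamSqSum * ∑' k : Freq, wmod (fun n => lamExt n ^ (p + 1)) c k.1 ^ 2 :=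
        tsum_mul_sq_le _ _
    _ ≤ invLamSqSum * ∑' n, wmod (fun n => lamExt n ^ (p + 1)) c n ^ 2 := by
        gcongr; exact tsum_freq_le fun n => wmod (fun n => lamExt n ^ (p + 1)) c n ^ 2
    _ = invLamSqSum * ehSq (2 * p + 2) c := by rw [tsum_wmod_rpow_sq, mul_add, mul_one]

lemma tsum_conv_wmod_sq_le (p : ℝ) {v : ℤ × ℤ → ℝ} (hv : ∀ n, 0 ≤ v n) (c d : Coef) :
    ∑' k : Freq, conv (wmod (fun n => lamExt n ^ p) c) (wmod v d) k.1 ^ 2 ≤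
      invLamSqSum * ehSq (2 * p + 2) c * ewSq (fun k => v k.1 ^ 2) d :=
  calc _ ≤ ∑' n, conv (wmod (fun n => lamExt n ^ p) c) (wmod v d) n ^ 2 :=
        tsum_freq_le fun n => conv (wmod (fun n => lamExt n ^ p) c) (wmod v d) n ^ 2
    _ ≤ (∑' n, wmod (fun n => lamExt n ^ p) c n) ^ 2 * ∑' n, wmod v d n ^ 2 :=
        tsum_conv_sq_le _ _
    _ ≤ _ := by rw [tsum_wmod_sq hv]; gcongr; exact tsum_wmod_rpow_le p c

end SobolevNorms

section Nonlinearity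

lemma evec_norm_sq (k : Freq) : (evec k).1 ^ 2 + (evec k).2 ^ 2 = 1 := by
  have h := knormSq_pos k
  simp only [evec, div_pow, neg_sq, Real.sq_sqrt h.le]
  rw [← add_div, div_eq_one_iff_eq h.ne', knormSq, add_comm]

lemma dotR_evec_fvec_self (k : Freq) : dotR (evec k) (fvec k) = 0 := by
  simp only [dotR, evec, fvec]
  ring

lemma abs_dotR_le (a b : ℝ × ℝ) : |dotR a b| ≤ √(a.1 ^ 2 + a.2 ^ 2) * √(b.1 ^ 2 + b.2 ^ 2) := by
  rw [← Real.sqrt_mul (by positivity), dotR]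
  exact Real.abs_le_sqrt (by nlinarith [sq_nonneg (a.1 * b.2 - a.2 * b.1)])

lemma abs_dotR_evec_le (m : Freq) (b : ℝ × ℝ) : |dotR (evec m) b| ≤ √(b.1 ^ 2 + b.2 ^ 2) := by
  simpa [evec_norm_sq] using abs_dotR_le (evec m) b

/-- The symbol `(e_m·n)(e_n·e_k)` of the transport nonlinearity. -/
def bsymb (k m n : Freq) : ℝ := dotR (evec m) (fvec n) * dotR (evec n) (evec k)

lemma abs_bsymb_le_abs_dotR (k m n : Freq) : |bsymb k m n| ≤ |dotR (evec m) (fvec n)| := by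
  rw [bsymb, abs_mul]
  refine mul_le_of_le_one_right (abs_nonneg _) ?_
  simpa [evec_norm_sq] using abs_dotR_evec_le n (evec k)

lemma abs_bsymb_le_right (k m n : Freq) : |bsymb k m n| ≤ √(knormSq n) :=
  (abs_bsymb_le_abs_dotR k m n).trans (abs_dotR_evec_le m (fvec n))

lemma abs_bsymb_le_out {k m n : Freq} (h : k.1 = m.1 + n.1) : |bsymb k m n| ≤ √(knormSq k) := by
  have hk : fvec k = fvec m + fvec n := by simp [fvec, h]
  -- incompressibility `e_m·m = 0` moves the derivative onto the product
  have hdot : dotR (evec m) (fvec n) = dotR (evec m) (fvec k) := by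
    rw [← zero_add (dotR _ (fvec n)), ← dotR_evec_fvec_self m, hk]
    simp only [dotR, Prod.fst_add, Prod.snd_add]
    ring
  exact (abs_bsymb_le_abs_dotR k m n).trans (hdot ▸ abs_dotR_evec_le m (fvec k))

/-- The `m`-th summand of the series defining `Bc c d k`. -/
def Bterm (c d : Coef) (k m : Freq) : ℂ :=
  if h : k.1 - m.1 ≠ 0 then c m * d ⟨k.1 - m.1, h⟩ * (bsymb k m ⟨k.1 - m.1, h⟩ : ℂ) else 0

lemma Bc_eq_tsum (c d : Coef) (k : Freq) :
    Bc c d k = ((2 * Real.pi : ℝ) : ℂ) * Complex.I * ∑' m, Bterm c d k m := rfl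

lemma enorm_two_pi_I : ‖((2 * Real.pi : ℝ) : ℂ) * Complex.I‖ₑ = ENNReal.ofReal (2 * Real.pi) := by
  rw [enorm_mul, ← ofReal_norm, ← ofReal_norm, Complex.norm_I, ENNReal.ofReal_one, mul_one,
    Complex.norm_real, Real.norm_of_nonneg Real.two_pi_pos.le]

lemma enorm_ofReal_le {x y : ℝ} (h : |x| ≤ y) : ‖(x : ℂ)‖ₑ ≤ ENNReal.ofReal y := by
  rw [← ofReal_norm, Complex.norm_real]
  exact ENNReal.ofReal_le_ofReal h

lemma enorm_Bterm_le_of_abs_bsymb_le {c d : Coef} {k m : Freq} {y : ℤ × ℤ → ℝ}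
    (h : ∀ n : Freq, k.1 = m.1 + n.1 → |bsymb k m n| ≤ y n.1) :
    ‖Bterm c d k m‖ₑ ≤ emod c m.1 * wmod y d (k.1 - m.1) := by
  unfold Bterm
  split_ifs with hn
  · rw [enorm_mul, enorm_mul, emod, wmod, emod, zeroExt_freq, zeroExt_of_ne d hn, mul_assoc,
      mul_comm (ENNReal.ofReal _)]
    gcongr
    exact enorm_ofReal_le (h ⟨k.1 - m.1, hn⟩ (by simp))
  · simp

lemma enorm_Bterm_le (c d : Coef) (k m : Freq) :
    ‖Bterm c d k m‖ₑ ≤ ENNReal.ofReal √(knormSq k) * (emod c m.1 * emod d (k.1 - m.1)) :=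
  (enorm_Bterm_le_of_abs_bsymb_le (y := fun _ => √(knormSq k)) fun _ => abs_bsymb_le_out).trans_eq
    (by rw [wmod, mul_left_comm])

lemma enorm_two_pi_I_mul_tsum_le {g : Freq → ℂ} {Z : ℤ × ℤ → ℝ≥0∞}
    (h : ∀ m : Freq, ‖g m‖ₑ ≤ Z m.1) :
    ‖((2 * Real.pi : ℝ) : ℂ) * Complex.I * ∑' m, g m‖ₑ ≤
      ENNReal.ofReal (2 * Real.pi) * ∑' n, Z n := by
  rw [enorm_mul, enorm_two_pi_I]
  gcongr
  calc ‖∑' m, g m‖ₑ ≤ ∑' m, ‖g m‖ₑ := enorm_tsum_le_tsum_enorm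
    _ ≤ ∑' m : Freq, Z m.1 := ENNReal.tsum_le_tsum h
    _ ≤ ∑' n, Z n := tsum_freq_le Z

lemma ofReal_sqrt_lam (k : Freq) :
    ENNReal.ofReal √(lam k) = ENNReal.ofReal (2 * Real.pi) * ENNReal.ofReal √(knormSq k) := by
  rw [sqrt_lam, ENNReal.ofReal_mul Real.two_pi_pos.le]

lemma enorm_Bc_le_conv_wmod (c d : Coef) (k : Freq) :
    ‖Bc c d k‖ₑ ≤ conv (emod c) (wmod (fun n => √(lamExt n)) d) k.1 := by
  rw [Bc_eq_tsum]
  refine (enorm_two_pi_I_mul_tsum_le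
    (Z := fun m => emod c m * wmod (fun n => (2 * Real.pi)⁻¹ * √(lamExt n)) d (k.1 - m))
    fun m => enorm_Bterm_le_of_abs_bsymb_le fun n _ => ?_).trans_eq ?_
  · rw [lamExt_freq, sqrt_lam, inv_mul_cancel_left₀ Real.two_pi_pos.ne']
    exact abs_bsymb_le_right k m n
  · rw [conv, ← ENNReal.tsum_mul_left]
    refine tsum_congr fun m => ?_
    rw [mul_left_comm, wmod, wmod, ← mul_assoc (ENNReal.ofReal (2 * Real.pi)),
      ← ENNReal.ofReal_mul Real.two_pi_pos.le, mul_inv_cancel_left₀ Real.two_pi_pos.ne']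

lemma enorm_Bc_le_conv (c d : Coef) (k : Freq) :
    ‖Bc c d k‖ₑ ≤ ENNReal.ofReal √(lam k) * conv (emod c) (emod d) k.1 := by
  refine (enorm_two_pi_I_mul_tsum_le (Z := fun m => ENNReal.ofReal √(knormSq k) *
    (emod c m * emod d (k.1 - m))) (enorm_Bterm_le c d k)).trans_eq ?_
  rw [ENNReal.tsum_mul_left, ← mul_assoc, ← ofReal_sqrt_lam, conv]

lemma tsum_emod_sq (c : Coef) : ∑' n, emod c n ^ 2 = ehSq 0 c := by
  simpa only [wmod_rpow_zero, mul_zero] using tsum_wmod_rpow_sq 0 c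

lemma conv_emod_sq_le (c d : Coef) (n : ℤ × ℤ) :
    conv (emod c) (emod d) n ^ 2 ≤ ehSq 0 c * ehSq 0 d := by
  simpa only [tsum_emod_sq] using conv_sq_le (emod c) (emod d) n

lemma summable_Bterm {c d : Coef} (hc : FinH 0 c) (hd : FinH 0 d) (k : Freq) :
    Summable (Bterm c d k) := by
  have hconv : conv (emod c) (emod d) k.1 ≠ ⊤ := fun htop =>
    ENNReal.mul_ne_top (finH_iff_ehSq_ne_top.1 hc) (finH_iff_ehSq_ne_top.1 hd)
      (top_unique (by simpa [htop] using conv_emod_sq_le c d k.1))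
  have hle : ∑' m, ‖Bterm c d k m‖ₑ ≤
      ENNReal.ofReal √(knormSq k) * conv (emod c) (emod d) k.1 := by
    refine (ENNReal.tsum_le_tsum (enorm_Bterm_le c d k)).trans ?_
    rw [ENNReal.tsum_mul_left]
    gcongr
    exact tsum_freq_le fun m => emod c m * emod d (k.1 - m)
  refine Summable.of_norm ?_
  simpa using ENNReal.summable_toReal
    (ne_top_of_le_ne_top (ENNReal.mul_ne_top ENNReal.ofReal_ne_top hconv) hle)

lemma Bterm_sub_Bterm (c d c' d' : Coef) (k m : Freq) :
    Bterm c d k m - Bterm c' d' k m = Bterm c (d - d') k m + Bterm (c - c') d' k m := by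
  unfold Bterm
  split_ifs with h
  · have hd : (d - d') ⟨k.1 - m.1, h⟩ = d ⟨k.1 - m.1, h⟩ - d' ⟨k.1 - m.1, h⟩ := rfl
    rw [hd, show (c - c') m = c m - c' m from rfl]
    ring
  · simp

lemma enorm_Bc_sub_Bc_le {c d c' d' : Coef} (hc : FinH 0 c) (hd : FinH 0 d) (hc' : FinH 0 c')
    (hd' : FinH 0 d') (k : Freq) :
    ‖Bc c d k - Bc c' d' k‖ₑ ≤ ENNReal.ofReal √(lam k) *
      (conv (emod c) (emod (d - d')) k.1 + conv (emod (c - c')) (emod d') k.1) := by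
  rw [Bc_eq_tsum, Bc_eq_tsum, ← mul_sub,
    ← (summable_Bterm hc hd k).tsum_sub (summable_Bterm hc' hd' k)]
  refine (enorm_two_pi_I_mul_tsum_le (Z := fun m => ENNReal.ofReal √(knormSq k) *
    (emod c m * emod (d - d') (k.1 - m) + emod (c - c') m * emod d' (k.1 - m)))
    fun m => ?_).trans_eq ?_
  · rw [Bterm_sub_Bterm, mul_add]
    exact (enorm_add_le _ _).trans (add_le_add (enorm_Bterm_le _ _ _ _) (enorm_Bterm_le _ _ _ _))
  · rw [ENNReal.tsum_mul_left, ENNReal.tsum_add, ← mul_assoc, ← ofReal_sqrt_lam, conv, conv]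

end Nonlinearity

section ProductEstimates

lemma ofReal_mul_conv_emod_le {ι : Type*} [Fintype ι] {w C : ℝ} {x y : ι → ℤ × ℤ → ℝ}
    (hC : 0 ≤ C) (hx : ∀ i n, 0 ≤ x i n) (hy : ∀ i n, 0 ≤ y i n) {k : Freq}
    (h : ∀ m n : Freq, k.1 = m.1 + n.1 → w ≤ C * ∑ i, x i m.1 * y i n.1) (c d : Coef) :
    ENNReal.ofReal w * conv (emod c) (emod d) k.1 ≤
      ENNReal.ofReal C * ∑ i, conv (wmod (x i) c) (wmod (y i) d) k.1 := by
  simp only [conv]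
  rw [← Summable.tsum_finsetSum fun _ _ => ENNReal.summable, ← ENNReal.tsum_mul_left,
    ← ENNReal.tsum_mul_left]
  refine ENNReal.tsum_le_tsum fun m => ?_
  by_cases hm : m = 0
  · simp [hm, emod_zero]
  by_cases hn : k.1 - m = 0
  · simp [hn, emod_zero]
  calc _ ≤ ENNReal.ofReal (C * ∑ i, x i m * y i (k.1 - m)) * (emod c m * emod d (k.1 - m)) := by
        gcongr
        exact h ⟨m, hm⟩ ⟨k.1 - m, hn⟩ (by simp)
    _ = _ := by
        rw [ENNReal.ofReal_mul hC, ENNReal.ofReal_sum_of_nonneg fun i _ =>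
          mul_nonneg (hx i m) (hy i _), mul_assoc, Finset.sum_mul]
        refine congrArg _ (Finset.sum_congr rfl fun i _ => ?_)
        rw [ENNReal.ofReal_mul (hx i m), wmod, wmod]
        ring

lemma tsum_ofReal_mul_conv_self_sq_le {v : ℤ × ℤ → ℝ} (hv : ∀ n, 0 ≤ v n) {C : ℝ} (hC : 0 ≤ C)
    (hadd : ∀ m n, v (m + n) ≤ C * (v m + v n)) (c : Coef) :
    ∑' k : Freq, (ENNReal.ofReal (v k.1) * conv (emod c) (emod c) k.1) ^ 2 ≤
      ENNReal.ofReal C ^ 2 * (4 * invLamSqSum) * ehSq 2 c * ewSq (fun k => v k.1 ^ 2) c := by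
  have hpoint : ∀ k : Freq, ENNReal.ofReal (v k.1) * conv (emod c) (emod c) k.1 ≤
      ENNReal.ofReal C * (2 * conv (emod c) (wmod v c) k.1) := fun k => by
    have h := ofReal_mul_conv_emod_le (w := v k.1) (x := ![v, fun _ => 1])
      (y := ![fun _ => 1, v]) hC (fun i n => by fin_cases i <;> simp [hv])
      (fun i n => by fin_cases i <;> simp [hv]) (k := k)
      (fun m n hk => by simpa [Fin.sum_univ_two, hk] using hadd m.1 n.1) c c
    simpa [Fin.sum_univ_two, wmod_one, conv_comm (wmod v c), ← two_mul] using h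
  calc _ ≤ ∑' k : Freq, (ENNReal.ofReal C * (2 * conv (emod c) (wmod v c) k.1)) ^ 2 :=
        ENNReal.tsum_le_tsum fun k => pow_le_pow_left' (hpoint k) 2
    _ = ENNReal.ofReal C ^ 2 * 4 * ∑' k : Freq, conv (emod c) (wmod v c) k.1 ^ 2 := by
        rw [← ENNReal.tsum_mul_left]
        exact tsum_congr fun k => by ring
    _ ≤ ENNReal.ofReal C ^ 2 * 4 * (invLamSqSum * ehSq 2 c * ewSq (fun k => v k.1 ^ 2) c) := by
        gcongr
        simpa only [wmod_rpow_zero, mul_zero, zero_add] using tsum_conv_wmod_sq_le 0 hv c c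
    _ = _ := by ring

lemma rpow_le_mul_rpow_of_nonpos {x y C p : ℝ} (hx : 0 < x) (hy : 0 < y) (hC : 0 < C)
    (h : x ≤ C * y) (hp : p ≤ 0) : y ^ p ≤ C ^ (-p) * x ^ p := by
  calc y ^ p = C ^ (-p) * (C * y) ^ p := by
        rw [Real.mul_rpow hC.le hy.le, ← mul_assoc, ← Real.rpow_add hC, neg_add_cancel,
          Real.rpow_zero, one_mul]
    _ ≤ C ^ (-p) * x ^ p :=
        mul_le_mul_of_nonneg_left (Real.rpow_le_rpow_of_nonpos hx h hp) (by positivity)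

lemma rpow_le_mul_rpow_of_nonneg {x y C p : ℝ} (hx : 0 ≤ x) (hy : 0 ≤ y) (hC : 0 ≤ C)
    (h : x ≤ C * y) (hp : 0 ≤ p) : x ^ p ≤ C ^ p * y ^ p :=
  (Real.rpow_le_rpow hx h hp).trans_eq (Real.mul_rpow hC hy)

lemma max_lam_le_mul (m n : Freq) : max (lam m) (lam n) ≤ lam m * lam n :=
  max_le (le_mul_of_one_le_right (lam_pos m).le (one_le_lam n))
    (le_mul_of_one_le_left (lam_pos n).le (one_le_lam m))

lemma lam_rpow_le_mul {k m n : Freq} (h : k.1 = m.1 + n.1) (p : ℝ) :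
    lam k ^ p ≤ 4 ^ |p| * (lam m ^ |p| * lam n ^ p) := by
  have hk := lam_pos k
  have hm := lam_pos m
  have hn := lam_pos n
  rcases le_total 0 p with hp | hp
  · rw [abs_of_nonneg hp, ← Real.mul_rpow hm.le hn.le]
    exact rpow_le_mul_rpow_of_nonneg hk.le (by positivity) zero_le_four
      ((lam_le_four_mul_max h).trans (by gcongr; exact max_lam_le_mul m n)) hp
  · rw [abs_of_nonpos hp, ← mul_assoc, ← Real.mul_rpow zero_le_four hm.le]
    refine rpow_le_mul_rpow_of_nonpos hn hk (by positivity) ?_ hp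
    rw [mul_assoc]
    exact (lam_le_four_mul_max' h).trans (by gcongr; exact max_lam_le_mul m k)

/-- Unlike in `lam_rpow_le_mul`, a factor `λ⁻¹` is gained in every term in which `λ_m` occurs:
this is why no derivatives beyond `Ḣ^{2|p|}` are lost in products with `Ḣ^{2p}` once `|p| ≥ 1`. -/
lemma lam_rpow_le_add {k m n : Freq} (h : k.1 = m.1 + n.1) {p : ℝ} (hp1 : 1 ≤ |p|) :
    lam k ^ p ≤ 4 ^ |p| * (lam n ^ p + lam m ^ |p| * lam n ^ (p - 1) +
      (lam k)⁻¹ * (lam m ^ |p| * lam n ^ p)) := by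
  have hk := lam_pos k
  have hm := lam_pos m
  have hn := lam_pos n
  suffices hmax : lam k ^ p ≤ 4 ^ |p| * lam n ^ p ∨
      lam k ^ p ≤ 4 ^ |p| * (lam m ^ |p| * lam n ^ (p - 1)) ∨
      lam k ^ p ≤ 4 ^ |p| * ((lam k)⁻¹ * (lam m ^ |p| * lam n ^ p)) by
    have h4 : (0 : ℝ) < 4 ^ |p| := by positivity
    have h1 : 0 ≤ lam n ^ p := by positivity
    have h2 : 0 ≤ lam m ^ |p| * lam n ^ (p - 1) := by positivity
    have h3 : 0 ≤ (lam k)⁻¹ * (lam m ^ |p| * lam n ^ p) := by positivity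
    rcases hmax with hle | hle | hle <;>
      exact hle.trans (mul_le_mul_of_nonneg_left (by linarith) h4.le)
  rcases le_total 0 p with hp | hp
  · rw [abs_of_nonneg hp] at hp1 ⊢
    have hle := lam_le_four_mul_max h
    rcases max_choice (lam m) (lam n) with hmn | hmn <;> rw [hmn] at hle
    · refine Or.inr (Or.inl ((rpow_le_mul_rpow_of_nonneg hk.le hm.le zero_le_four hle hp).trans ?_))
      gcongr
      exact le_mul_of_one_le_right (by positivity) (Real.one_le_rpow (one_le_lam n) (by linarith))
    · exact Or.inl (rpow_le_mul_rpow_of_nonneg hk.le hn.le zero_le_four hle hp)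
  · rw [abs_of_nonpos hp] at hp1 ⊢
    have hle := lam_le_four_mul_max' h
    rcases max_choice (lam m) (lam k) with hmk | hmk <;> rw [hmk] at hle
    · refine Or.inr (Or.inr ?_)
      calc lam k ^ p ≤ lam k ^ (-1 : ℝ) * (lam m ^ (-p) * lam m ^ p) := by
            rw [← Real.rpow_add hm, neg_add_cancel, Real.rpow_zero, mul_one]
            exact Real.rpow_le_rpow_of_exponent_le (one_le_lam k) (by linarith)
        _ ≤ lam k ^ (-1 : ℝ) * (lam m ^ (-p) * (4 ^ (-p) * lam n ^ p)) := by
            gcongr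
            exact rpow_le_mul_rpow_of_nonpos hn hm four_pos hle hp
        _ = 4 ^ (-p) * ((lam k)⁻¹ * (lam m ^ (-p) * lam n ^ p)) := by
            rw [Real.rpow_neg_one]
            ring
    · exact Or.inl (rpow_le_mul_rpow_of_nonpos hn hk four_pos hle hp)

lemma tsum_rpow_mul_conv_sq_le (p : ℝ) (c d : Coef) :
    ∑' k : Freq, (ENNReal.ofReal (lam k ^ p) * conv (emod c) (emod d) k.1) ^ 2 ≤
      ENNReal.ofReal (4 ^ |p|) ^ 2 * invLamSqSum * (ehSq (2 * |p| + 2) c * ehSq (2 * p) d) := by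
  have hrpow : ∀ (q : ℝ) (n : ℤ × ℤ), 0 ≤ lamExt n ^ q :=
    fun q n => Real.rpow_nonneg (lamExt_nonneg n) q
  have hpoint : ∀ k : Freq, ENNReal.ofReal (lam k ^ p) * conv (emod c) (emod d) k.1 ≤
      ENNReal.ofReal (4 ^ |p|) *
        conv (wmod (fun n => lamExt n ^ |p|) c) (wmod (fun n => lamExt n ^ p) d) k.1 := fun k => by
    simpa using ofReal_mul_conv_emod_le (ι := Unit) (x := fun _ n => lamExt n ^ |p|)
      (y := fun _ n => lamExt n ^ p) (by positivity) (fun _ => hrpow _) (fun _ => hrpow _)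
      (fun m n hk => by simpa [lamExt_freq] using lam_rpow_le_mul hk p) c d
  refine (ENNReal.tsum_le_tsum fun k => pow_le_pow_left' (hpoint k) 2).trans ?_
  simp only [mul_pow]
  rw [ENNReal.tsum_mul_left, mul_assoc]
  gcongr
  refine (tsum_conv_wmod_sq_le _ (hrpow p) c d).trans_eq ?_
  rw [← tsum_wmod_sq (hrpow p), tsum_wmod_rpow_sq, mul_assoc]

lemma tsum_inv_lam_mul_conv_sq_le (X Y : ℤ × ℤ → ℝ≥0∞) :
    ∑' k : Freq, (ENNReal.ofReal (lam k)⁻¹ * conv X Y k.1) ^ 2 ≤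
      invLamSqSum * ((∑' m, X m ^ 2) * ∑' m, Y m ^ 2) := by
  rw [invLamSqSum, ← ENNReal.tsum_mul_right]
  refine ENNReal.tsum_le_tsum fun k => ?_
  rw [mul_pow]
  gcongr
  exact conv_sq_le X Y k.1

lemma add_add_sq_le (x y z : ℝ≥0∞) : (x + y + z) ^ 2 ≤ 4 * (x ^ 2 + y ^ 2 + z ^ 2) := by
  calc (x + y + z) ^ 2 ≤ 2 * ((x + y) ^ 2 + z ^ 2) := add_sq_le_two_mul _ _
    _ ≤ 2 * (2 * (x ^ 2 + y ^ 2) + 2 * z ^ 2) := by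
        gcongr
        · exact add_sq_le_two_mul x y
        · exact le_mul_of_one_le_left' one_le_two
    _ = 4 * (x ^ 2 + y ^ 2 + z ^ 2) := by ring

lemma rpow_mul_conv_le_add {p : ℝ} (hp : 1 ≤ |p|) (c d : Coef) (k : Freq) :
    ENNReal.ofReal (lam k ^ p) * conv (emod c) (emod d) k.1 ≤ ENNReal.ofReal (4 ^ |p|) *
      (conv (emod c) (wmod (fun n => lamExt n ^ p) d) k.1 +
        conv (wmod (fun n => lamExt n ^ (p - 1)) d) (wmod (fun n => lamExt n ^ |p|) c) k.1 +
        ENNReal.ofReal (lam k)⁻¹ *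
          conv (wmod (fun n => lamExt n ^ |p|) c) (wmod (fun n => lamExt n ^ p) d) k.1) := by
  have hrpow : ∀ (q : ℝ) (n : ℤ × ℤ), 0 ≤ lamExt n ^ q :=
    fun q n => Real.rpow_nonneg (lamExt_nonneg n) q
  have hk : 0 ≤ (lam k)⁻¹ := (inv_pos.2 (lam_pos k)).le
  have h := ofReal_mul_conv_emod_le (w := lam k ^ p)
    (x := ![fun _ => 1, fun n => lamExt n ^ |p|, fun n => (lam k)⁻¹ * lamExt n ^ |p|])
    (y := ![fun n => lamExt n ^ p, fun n => lamExt n ^ (p - 1), fun n => lamExt n ^ p])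
    (C := 4 ^ |p|) (by positivity)
    (fun i n => by fin_cases i <;> simp [hrpow, mul_nonneg, hk])
    (fun i n => by fin_cases i <;> simp [hrpow])
    (fun m n hmn => by
      simpa [Fin.sum_univ_three, lamExt_freq, mul_assoc] using lam_rpow_le_add hmn hp) c d
  have hlast : conv (wmod (fun n => (lam k)⁻¹ * lamExt n ^ |p|) c)
      (wmod (fun n => lamExt n ^ p) d) k.1 = ENNReal.ofReal (lam k)⁻¹ *
        conv (wmod (fun n => lamExt n ^ |p|) c) (wmod (fun n => lamExt n ^ p) d) k.1 := by
    simp only [conv, wmod, ENNReal.ofReal_mul hk, mul_assoc, ENNReal.tsum_mul_left]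
  simpa [Fin.sum_univ_three, wmod_one, hlast,
    conv_comm (wmod (fun n => lamExt n ^ |p|) c) (wmod (fun n => lamExt n ^ (p - 1)) d)] using h

lemma tsum_rpow_mul_conv_sq_le_of_one_le_abs {p : ℝ} (hp : 1 ≤ |p|) (c d : Coef) :
    ∑' k : Freq, (ENNReal.ofReal (lam k ^ p) * conv (emod c) (emod d) k.1) ^ 2 ≤
      ENNReal.ofReal (4 ^ |p|) ^ 2 * (12 * invLamSqSum) * (ehSq (2 * |p|) c * ehSq (2 * p) d) := by
  have hrpow : ∀ (q : ℝ) (n : ℤ × ℤ), 0 ≤ lamExt n ^ q :=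
    fun q n => Real.rpow_nonneg (lamExt_nonneg n) q
  set X := wmod (fun n => lamExt n ^ |p|) c with hX
  set Y := wmod (fun n => lamExt n ^ p) d with hY
  set Y' := wmod (fun n => lamExt n ^ (p - 1)) d
  set E := invLamSqSum * (ehSq (2 * |p|) c * ehSq (2 * p) d) with hE
  have hlow : ∑' k : Freq, conv (emod c) Y k.1 ^ 2 ≤ E := by
    have h := tsum_conv_wmod_sq_le 0 (hrpow p) c d
    rw [← tsum_wmod_sq (hrpow p), tsum_wmod_rpow_sq, wmod_rpow_zero, mul_zero, zero_add,
      mul_assoc] at h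
    refine h.trans ?_
    rw [hE]
    gcongr
    exact ehSq_mono (by linarith) c
  have hhigh : ∑' k : Freq, conv Y' X k.1 ^ 2 ≤ E := by
    have h := tsum_conv_wmod_sq_le (p - 1) (hrpow |p|) d c
    rw [← tsum_wmod_sq (hrpow |p|), tsum_wmod_rpow_sq, mul_assoc, mul_comm (ehSq _ d),
      show 2 * (p - 1) + 2 = 2 * p by ring] at h
    exact h
  have hout : ∑' k : Freq, (ENNReal.ofReal (lam k)⁻¹ * conv X Y k.1) ^ 2 ≤ E := by
    have h := tsum_inv_lam_mul_conv_sq_le X Y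
    rwa [hX, hY, tsum_wmod_rpow_sq, tsum_wmod_rpow_sq] at h
  calc _ ≤ ∑' k : Freq, ENNReal.ofReal (4 ^ |p|) ^ 2 * (4 * (conv (emod c) Y k.1 ^ 2 +
          conv Y' X k.1 ^ 2 + (ENNReal.ofReal (lam k)⁻¹ * conv X Y k.1) ^ 2)) :=
        ENNReal.tsum_le_tsum fun k => by
          refine (pow_le_pow_left' (rpow_mul_conv_le_add hp c d k) 2).trans ?_
          rw [mul_pow]
          gcongr
          exact add_add_sq_le _ _ _
    _ ≤ ENNReal.ofReal (4 ^ |p|) ^ 2 * (4 * (E + E + E)) := by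
        rw [ENNReal.tsum_mul_left, ENNReal.tsum_mul_left, ENNReal.tsum_add, ENNReal.tsum_add]
        gcongr
    _ = _ := by rw [hE]; ring

lemma exists_tsum_rpow_mul_conv_sq_le {a r : ℝ} (h : |a| + 2 ≤ r ∨ 2 ≤ |a| ∧ |a| ≤ r) :
    ∃ C : ℝ≥0∞, C ≠ ⊤ ∧ ∀ c d : Coef,
      ∑' k : Freq, (ENNReal.ofReal (lam k ^ (a / 2)) * conv (emod c) (emod d) k.1) ^ 2 ≤
        C * (ehSq r c * ehSq a d) := by
  have habs : 2 * |a / 2| = |a| := by rw [abs_div, abs_two]; ring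
  have ha : 2 * (a / 2) = a := by ring
  rcases h with h | ⟨h2, h⟩
  · refine ⟨ENNReal.ofReal (4 ^ |a / 2|) ^ 2 * invLamSqSum,
      ENNReal.mul_ne_top (ENNReal.pow_ne_top ENNReal.ofReal_ne_top) invLamSqSum_ne_top, fun c d =>
        (tsum_rpow_mul_conv_sq_le (a / 2) c d).trans ?_⟩
    rw [habs, ha]
    gcongr
    exact ehSq_mono h c
  · refine ⟨ENNReal.ofReal (4 ^ |a / 2|) ^ 2 * (12 * invLamSqSum),
      ENNReal.mul_ne_top (ENNReal.pow_ne_top ENNReal.ofReal_ne_top)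
      (ENNReal.mul_ne_top ENNReal.ofNat_ne_top invLamSqSum_ne_top), fun c d =>
      (tsum_rpow_mul_conv_sq_le_of_one_le_abs (p := a / 2) (by linarith) c d).trans ?_⟩
    rw [habs, ha]
    gcongr
    exact ehSq_mono h c

end ProductEstimates

section EnergyMethod

lemma ewSq_le_ofReal_of_sum_le {W : Freq → ℝ} (hW : ∀ k, 0 ≤ W k) {c : Coef} {R : ℝ}
    (h : ∀ F : Finset Freq, ∑ k ∈ F, W k * ‖c k‖ ^ 2 ≤ R) : ewSq W c ≤ ENNReal.ofReal R := by
  rw [ewSq, ENNReal.tsum_eq_iSup_sum]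
  refine iSup_le fun F => ?_
  rw [← ENNReal.ofReal_sum_of_nonneg fun k _ => mul_nonneg (hW k) (sq_nonneg _)]
  exact ENNReal.ofReal_le_ofReal (h F)

lemma sum_le_toReal_ewSq {W : Freq → ℝ} (hW : ∀ k, 0 ≤ W k) {c : Coef} (hc : ewSq W c ≠ ⊤)
    (F : Finset Freq) : ∑ k ∈ F, W k * ‖c k‖ ^ 2 ≤ (ewSq W c).toReal := by
  rw [← ENNReal.ofReal_le_iff_le_toReal hc,
    ENNReal.ofReal_sum_of_nonneg fun k _ => mul_nonneg (hW k) (sq_nonneg _)]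
  exact ENNReal.sum_le_tsum F

lemma two_mul_inner_sub_le {V : Type*} [NormedAddCommGroup V] [InnerProductSpace ℝ V] {μ : ℝ}
    (hμ : 0 < μ) (x y : V) : 2 * inner ℝ x y - μ * ‖x‖ ^ 2 ≤ ‖y‖ ^ 2 / μ := by
  have hsq : 0 ≤ ‖y - μ • x‖ ^ 2 := sq_nonneg _
  rw [norm_sub_sq_real, inner_smul_right, norm_smul, Real.norm_of_nonneg hμ.le,
    real_inner_comm] at hsq
  rw [le_div_iff₀ hμ]
  linarith

/-- `c` solves the forced heat equation `dc/dt + νAc = g` on `[0,T]` mode by mode, with each mode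
of the forcing bounded in time. No global regularity in `k` is imposed. -/
structure IsHeatSol (ν T : ℝ) (c g : ℝ → Coef) : Prop where
  continuousOn : ∀ k, ContinuousOn (fun t => c t k) (Icc 0 T)
  hasDerivAt : ∀ k, ∀ t ∈ Ioc (0 : ℝ) T,
    HasDerivAt (fun s => c s k) (g t k - ((ν * lam k : ℝ) : ℂ) * c t k) t
  bounded : ∀ k, ∃ M : ℝ, ∀ t ∈ Ioc (0 : ℝ) T, ‖g t k‖ ≤ M

namespace IsHeatSol

variable {ν T : ℝ} {c g : ℝ → Coef}

lemma sub {c' g' : ℝ → Coef} (h : IsHeatSol ν T c g) (h' : IsHeatSol ν T c' g') :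
    IsHeatSol ν T (c - c') (g - g') where
  continuousOn k := (h.continuousOn k).sub (h'.continuousOn k)
  hasDerivAt k t ht := ((h.hasDerivAt k t ht).sub (h'.hasDerivAt k t ht)).congr_deriv <| by
    simp only [Pi.sub_apply]
    ring
  bounded k := by
    obtain ⟨M, hM⟩ := h.bounded k
    obtain ⟨M', hM'⟩ := h'.bounded k
    exact ⟨M + M', fun t ht => (norm_sub_le _ _).trans (add_le_add (hM t ht) (hM' t ht))⟩

lemma aemeasurable (h : IsHeatSol ν T c g) (k : Freq) :
    AEMeasurable (fun t => c t k) (volume.restrict (Ioc 0 T)) :=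
  ((h.continuousOn k).mono Ioc_subset_Icc_self).aemeasurable measurableSet_Ioc

lemma aemeasurable_term (h : IsHeatSol ν T c g) (W : Freq → ℝ) (k : Freq) :
    AEMeasurable (fun t => ENNReal.ofReal (W k * ‖c t k‖ ^ 2)) (volume.restrict (Ioc 0 T)) :=
  (((h.aemeasurable k).norm.pow_const 2).const_mul (W k)).ennreal_ofReal

lemma aemeasurable_ewSq (h : IsHeatSol ν T c g) (W : Freq → ℝ) :
    AEMeasurable (fun t => ewSq W (c t)) (volume.restrict (Ioc 0 T)) :=
  AEMeasurable.tsum (h.aemeasurable_term W)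

lemma continuousOn_sum (h : IsHeatSol ν T c g) (W : Freq → ℝ) (F : Finset Freq) :
    ContinuousOn (fun t => ∑ k ∈ F, W k * ‖c t k‖ ^ 2) (Icc 0 T) :=
  continuousOn_finsetSum _ fun k _ => ((h.continuousOn k).norm.pow 2).const_mul _

lemma intervalIntegrable_sum (h : IsHeatSol ν T c g) {t : ℝ} (ht : t ∈ Icc 0 T) (W : Freq → ℝ)
    (F : Finset Freq) :
    IntervalIntegrable (fun s => ∑ k ∈ F, W k * ‖c s k‖ ^ 2) volume 0 t :=
  ((h.continuousOn_sum W F).mono (uIcc_of_le ht.1 ▸ Icc_subset_Icc_right ht.2)).intervalIntegrable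

lemma lintegral_ewSq_le (h : IsHeatSol ν T c g) (hT : 0 ≤ T) {W : Freq → ℝ} (hW : ∀ k, 0 ≤ W k)
    {R : ℝ} (hR : ∀ F : Finset Freq, ∫ t in (0 : ℝ)..T, ∑ k ∈ F, W k * ‖c t k‖ ^ 2 ≤ R) :
    ∫⁻ t in Ioc 0 T, ewSq W (c t) ≤ ENNReal.ofReal R := by
  have hnonneg : ∀ k t, 0 ≤ W k * ‖c t k‖ ^ 2 := fun k t => mul_nonneg (hW k) (sq_nonneg _)
  simp only [ewSq]
  rw [lintegral_tsum (h.aemeasurable_term W), ENNReal.tsum_eq_iSup_sum]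
  refine iSup_le fun F => le_trans (Eq.le ?_) (ENNReal.ofReal_le_ofReal (hR F))
  rw [intervalIntegral.integral_of_le hT, ofReal_integral_eq_lintegral_ofReal
      ((intervalIntegrable_iff_integrableOn_Ioc_of_le hT).1
        (h.intervalIntegrable_sum (right_mem_Icc.2 hT) W F))
      (.of_forall fun t => Finset.sum_nonneg fun k _ => hnonneg k t),
    ← lintegral_finsetSum' F fun k _ => h.aemeasurable_term W k]
  exact lintegral_congr fun t => (ENNReal.ofReal_sum_of_nonneg fun k _ => hnonneg k t).symm

lemma hasDerivAt_norm_sq (h : IsHeatSol ν T c g) (k : Freq) {t : ℝ} (ht : t ∈ Ioc 0 T) :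
    HasDerivAt (fun s => ‖c s k‖ ^ 2)
      (2 * inner ℝ (c t k) (g t k) - 2 * (ν * lam k) * ‖c t k‖ ^ 2) t := by
  convert (h.hasDerivAt k t ht).norm_sq using 1
  rw [inner_sub_right, ← Complex.real_smul, inner_smul_right, real_inner_self_eq_norm_sq]
  ring

lemma aemeasurable_forcing (h : IsHeatSol ν T c g) (k : Freq) :
    AEMeasurable (fun t => g t k) (volume.restrict (Ioc 0 T)) := by
  refine ((measurable_deriv fun s => c s k).aemeasurable.add
    ((h.aemeasurable k).const_mul ((ν * lam k : ℝ) : ℂ))).congr ?_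
  filter_upwards [ae_restrict_mem measurableSet_Ioc] with t ht
  simp only [Pi.add_apply, (h.hasDerivAt k t ht).deriv]
  ring

lemma intervalIntegrable_inner (h : IsHeatSol ν T c g) {t : ℝ} (ht : t ∈ Icc 0 T) (k : Freq) :
    IntervalIntegrable (fun s => inner ℝ (c s k) (g s k)) volume 0 t := by
  obtain ⟨X, hX⟩ := isCompact_Icc.exists_bound_of_continuousOn (h.continuousOn k)
  obtain ⟨Y, hY⟩ := h.bounded k
  have hsub : Ioc 0 t ⊆ Ioc 0 T := Ioc_subset_Ioc_right ht.2
  rw [intervalIntegrable_iff_integrableOn_Ioc_of_le ht.1]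
  refine IntegrableOn.mono_set (Integrable.of_bound
    ((h.aemeasurable k).inner (𝕜 := ℝ) (h.aemeasurable_forcing k)).aestronglyMeasurable
    (X * Y) ?_) hsub
  filter_upwards [ae_restrict_mem measurableSet_Ioc] with s hs
  have hXs := hX s (Ioc_subset_Icc_self hs)
  exact (norm_inner_le_norm _ _).trans
    (mul_le_mul hXs (hY s hs) (norm_nonneg _) ((norm_nonneg _).trans hXs))

lemma intervalIntegrable_norm_sq (h : IsHeatSol ν T c g) {t : ℝ} (ht : t ∈ Icc 0 T) (k : Freq) :
    IntervalIntegrable (fun s => ‖c s k‖ ^ 2) volume 0 t := by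
  simpa using h.intervalIntegrable_sum ht (fun _ => 1) {k}

lemma norm_sq_sub_norm_sq_eq_integral (h : IsHeatSol ν T c g) {t : ℝ} (ht : t ∈ Icc 0 T)
    (k : Freq) : ‖c t k‖ ^ 2 - ‖c 0 k‖ ^ 2 =
      ∫ s in (0 : ℝ)..t, (2 * inner ℝ (c s k) (g s k) - 2 * (ν * lam k) * ‖c s k‖ ^ 2) :=
  (intervalIntegral.integral_eq_sub_of_hasDerivAt_of_le ht.1
    (((h.continuousOn k).norm.pow 2).mono (Icc_subset_Icc_right ht.2))
    (fun _ hs => h.hasDerivAt_norm_sq k ⟨hs.1, hs.2.le.trans ht.2⟩)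
    (((h.intervalIntegrable_inner ht k).const_mul 2).sub
      ((h.intervalIntegrable_norm_sq ht k).const_mul _))).symm

lemma sum_add_integral_eq (h : IsHeatSol ν T c g) {t : ℝ} (ht : t ∈ Icc 0 T) (W : Freq → ℝ)
    (F : Finset Freq) :
    (∑ k ∈ F, W k * ‖c t k‖ ^ 2) +
        ν * ∫ s in (0 : ℝ)..t, ∑ k ∈ F, W k * lam k * ‖c s k‖ ^ 2 =
      (∑ k ∈ F, W k * ‖c 0 k‖ ^ 2) + ∫ s in (0 : ℝ)..t,
        ∑ k ∈ F, W k * (2 * inner ℝ (c s k) (g s k) - ν * lam k * ‖c s k‖ ^ 2) := by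
  have hint : ∀ k, IntervalIntegrable
      (fun s => 2 * inner ℝ (c s k) (g s k) - ν * lam k * ‖c s k‖ ^ 2) volume 0 t := fun k =>
    ((h.intervalIntegrable_inner ht k).const_mul 2).sub
      ((h.intervalIntegrable_norm_sq ht k).const_mul _)
  have hsq : ∀ k (r : ℝ), IntervalIntegrable (fun s => r * ‖c s k‖ ^ 2) volume 0 t := fun k r =>
    (h.intervalIntegrable_norm_sq ht k).const_mul r
  rw [intervalIntegral.integral_finsetSum fun k _ => hsq k _,
    intervalIntegral.integral_finsetSum fun k _ => (hint k).const_mul _, Finset.mul_sum,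
    ← Finset.sum_add_distrib, ← Finset.sum_add_distrib]
  refine Finset.sum_congr rfl fun k _ => ?_
  have hmode := h.norm_sq_sub_norm_sq_eq_integral ht k
  have hsplit : ∀ s, 2 * inner ℝ (c s k) (g s k) - 2 * (ν * lam k) * ‖c s k‖ ^ 2 =
      (2 * inner ℝ (c s k) (g s k) - ν * lam k * ‖c s k‖ ^ 2) - ν * lam k * ‖c s k‖ ^ 2 :=
    fun s => by ring
  simp only [hsplit] at hmode
  rw [intervalIntegral.integral_sub (hint k) (hsq k _), intervalIntegral.integral_const_mul]
    at hmode
  rw [intervalIntegral.integral_const_mul, intervalIntegral.integral_const_mul]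
  linear_combination W k * hmode

lemma sum_add_integral_le (h : IsHeatSol ν T c g) {t : ℝ} (ht : t ∈ Icc 0 T) {W : Freq → ℝ}
    {F : Finset Freq} {φ : ℝ → ℝ} (hφ : IntervalIntegrable φ volume 0 t)
    (hle : ∀ᵐ s ∂volume.restrict (Ioc 0 t),
      ∑ k ∈ F, W k * (2 * inner ℝ (c s k) (g s k) - ν * lam k * ‖c s k‖ ^ 2) ≤ φ s) :
    (∑ k ∈ F, W k * ‖c t k‖ ^ 2) +
        ν * ∫ s in (0 : ℝ)..t, ∑ k ∈ F, W k * lam k * ‖c s k‖ ^ 2 ≤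
      (∑ k ∈ F, W k * ‖c 0 k‖ ^ 2) + ∫ s in (0 : ℝ)..t, φ s := by
  rw [h.sum_add_integral_eq ht]
  refine add_le_add_right (intervalIntegral.integral_mono_ae_restrict ht.1 ?_ hφ
    (by rwa [← restrict_Ioc_eq_restrict_Icc])) _
  have hint := IntervalIntegrable.sum F fun k _ =>
    (((h.intervalIntegrable_inner ht k).const_mul 2).sub
      ((h.intervalIntegrable_norm_sq ht k).const_mul (ν * lam k))).const_mul (W k)
  exact hint.congr fun s _ => by simp only [Finset.sum_apply]

lemma sum_add_integral_le_of_forcing_le (h : IsHeatSol ν T c g) (hν : 0 < ν) {W : Freq → ℝ}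
    (hW : ∀ k, 0 ≤ W k) {φ : ℝ → ℝ} (hφ0 : ∀ s, 0 ≤ φ s)
    (hφ : IntervalIntegrable φ volume 0 T)
    (hg : ∀ᵐ s ∂volume.restrict (Ioc 0 T),
      ewSq (fun k => W k * (lam k)⁻¹) (g s) ≤ ENNReal.ofReal (ν * φ s))
    {t : ℝ} (ht : t ∈ Icc 0 T) (F : Finset Freq) :
    (∑ k ∈ F, W k * ‖c t k‖ ^ 2) +
        ν * ∫ s in (0 : ℝ)..t, ∑ k ∈ F, W k * lam k * ‖c s k‖ ^ 2 ≤
      (∑ k ∈ F, W k * ‖c 0 k‖ ^ 2) + ∫ s in (0 : ℝ)..t, φ s := by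
  refine h.sum_add_integral_le ht (hφ.mono_set (uIcc_subset_uIcc_left ?_)) ?_
  · rwa [uIcc_of_le (ht.1.trans ht.2)]
  filter_upwards [ae_restrict_of_ae_restrict_of_subset (Ioc_subset_Ioc_right ht.2) hg] with s hs
  have hW' : ∀ k, 0 ≤ W k * (lam k)⁻¹ := fun k => mul_nonneg (hW k) (inv_nonneg.2 (lam_pos k).le)
  calc _ ≤ ∑ k ∈ F, W k * (lam k)⁻¹ * ‖g s k‖ ^ 2 / ν := Finset.sum_le_sum fun k _ => by
        refine (mul_le_mul_of_nonneg_left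
          (two_mul_inner_sub_le (mul_pos hν (lam_pos k)) _ _) (hW k)).trans_eq ?_
        field_simp
    _ ≤ (ewSq (fun k => W k * (lam k)⁻¹) (g s)).toReal / ν := by
        rw [← Finset.sum_div]
        exact div_le_div_of_nonneg_right
          (sum_le_toReal_ewSq hW' (ne_top_of_le_ne_top ENNReal.ofReal_ne_top hs) F) hν.le
    _ ≤ φ s := by
        rw [div_le_iff₀' hν]
        exact ENNReal.toReal_le_of_le_ofReal (mul_nonneg hν.le (hφ0 s)) hs

lemma ewSq_le_and_lintegral_le (h : IsHeatSol ν T c g) (hT : 0 ≤ T) (hν : 0 < ν) {W : Freq → ℝ}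
    (hW : ∀ k, 0 ≤ W k) {R : ℝ} (hR : ∀ t ∈ Icc 0 T, ∀ F : Finset Freq,
      (∑ k ∈ F, W k * ‖c t k‖ ^ 2) +
        ν * ∫ s in (0 : ℝ)..t, ∑ k ∈ F, W k * lam k * ‖c s k‖ ^ 2 ≤ R) :
    (∀ t ∈ Icc 0 T, ewSq W (c t) ≤ ENNReal.ofReal R) ∧
      ∫⁻ t in Ioc 0 T, ewSq (fun k => W k * lam k) (c t) ≤ ENNReal.ofReal (R / ν) := by
  have hWlam : ∀ k, 0 ≤ W k * lam k := fun k => mul_nonneg (hW k) (lam_pos k).le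
  refine ⟨fun t ht => ewSq_le_ofReal_of_sum_le hW fun F => ?_,
    h.lintegral_ewSq_le hT hWlam fun F => ?_⟩
  · have hdiss : 0 ≤ ∫ s in (0 : ℝ)..t, ∑ k ∈ F, W k * lam k * ‖c s k‖ ^ 2 :=
      intervalIntegral.integral_nonneg ht.1 fun s _ =>
        Finset.sum_nonneg fun k _ => mul_nonneg (hWlam k) (sq_nonneg _)
    linarith [hR t ht F, mul_nonneg hν.le hdiss]
  · have henergy : 0 ≤ ∑ k ∈ F, W k * ‖c T k‖ ^ 2 :=
      Finset.sum_nonneg fun k _ => mul_nonneg (hW k) (sq_nonneg _)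
    rw [le_div_iff₀' hν]
    linarith [hR T (right_mem_Icc.2 hT) F]

lemma intervalIntegrable_mul_toReal_ewSq (h : IsHeatSol ν T c g) (hT : 0 ≤ T) {W : Freq → ℝ}
    {α : ℝ → ℝ} (hα : IntervalIntegrable α volume 0 T) {M : ℝ}
    (hM : ∀ t ∈ Icc 0 T, ewSq W (c t) ≤ ENNReal.ofReal M) :
    IntervalIntegrable (fun t => α t * (ewSq W (c t)).toReal) volume 0 T := by
  rw [intervalIntegrable_iff_integrableOn_Ioc_of_le hT] at hα ⊢
  refine Integrable.mul_bdd (c := (ENNReal.ofReal M).toReal) hα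
    (h.aemeasurable_ewSq W).ennreal_toReal.aestronglyMeasurable ?_
  filter_upwards [ae_restrict_mem measurableSet_Ioc] with t ht
  rw [Real.norm_of_nonneg ENNReal.toReal_nonneg]
  exact ENNReal.toReal_mono ENNReal.ofReal_ne_top (hM t (Ioc_subset_Icc_self ht))

lemma sum_add_integral_le_add_integral_mul (h : IsHeatSol ν T c g) (hν : 0 < ν)
    {W : Freq → ℝ} (hW : ∀ k, 0 ≤ W k) {α : ℝ → ℝ} (hα0 : ∀ t, 0 ≤ α t)
    (hα : IntervalIntegrable α volume 0 T) {β : ℝ} (hβ : 0 ≤ β)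
    (hg : ∀ᵐ t ∂volume.restrict (Ioc 0 T), ewSq (fun k => W k * (lam k)⁻¹) (g t) ≤
      ENNReal.ofReal (α t) * ewSq W (c t) + ENNReal.ofReal β)
    {M : ℝ} (hM : ∀ t ∈ Icc 0 T, ewSq W (c t) ≤ ENNReal.ofReal M)
    {t : ℝ} (ht : t ∈ Icc 0 T) (F : Finset Freq) :
    (∑ k ∈ F, W k * ‖c t k‖ ^ 2) +
        ν * ∫ s in (0 : ℝ)..t, ∑ k ∈ F, W k * lam k * ‖c s k‖ ^ 2 ≤
      (ewSq W (c 0)).toReal + β / ν * T +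
        ∫ s in (0 : ℝ)..t, α s / ν * (ewSq W (c s)).toReal := by
  have hT : 0 ≤ T := ht.1.trans ht.2
  have hfin : ∀ s ∈ Icc 0 T, ewSq W (c s) ≠ ⊤ := fun s hs =>
    ne_top_of_le_ne_top ENNReal.ofReal_ne_top (hM s hs)
  have hαE := h.intervalIntegrable_mul_toReal_ewSq hT (hα.div_const ν) hM
  have hβν : 0 ≤ β / ν := by positivity
  have henergy := h.sum_add_integral_le_of_forcing_le hν hW
    (φ := fun s => α s / ν * (ewSq W (c s)).toReal + β / ν)
    (fun s => add_nonneg (mul_nonneg (div_nonneg (hα0 s) hν.le) ENNReal.toReal_nonneg) hβν)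
    (hαE.add intervalIntegrable_const) ?_ ht F
  · rw [intervalIntegral.integral_add
        (hαE.mono_set (uIcc_subset_uIcc_left (uIcc_of_le hT ▸ ht))) intervalIntegrable_const,
      intervalIntegral.integral_const, smul_eq_mul, sub_zero] at henergy
    have hinit := sum_le_toReal_ewSq hW (hfin 0 (left_mem_Icc.2 hT)) F
    linarith [mul_le_mul_of_nonneg_right ht.2 hβν]
  · filter_upwards [hg, ae_restrict_mem measurableSet_Ioc] with s hs hsT
    refine hs.trans_eq ?_
    rw [mul_add, ← mul_assoc, mul_div_cancel₀ _ hν.ne', mul_div_cancel₀ _ hν.ne',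
      ENNReal.ofReal_add (mul_nonneg (hα0 s) ENNReal.toReal_nonneg) hβ,
      ENNReal.ofReal_mul (hα0 s), ENNReal.ofReal_toReal (hfin s (Ioc_subset_Icc_self hsT))]

lemma ewSq_le_and_lintegral_le_of_forcing_le (h : IsHeatSol ν T c g) (hT : 0 ≤ T) (hν : 0 < ν)
    {W : Freq → ℝ} (hW : ∀ k, 0 ≤ W k) {α : ℝ → ℝ} (hα0 : ∀ t, 0 ≤ α t)
    (hα : IntervalIntegrable α volume 0 T) {β : ℝ} (hβ : 0 ≤ β)
    (hg : ∀ᵐ t ∂volume.restrict (Ioc 0 T), ewSq (fun k => W k * (lam k)⁻¹) (g t) ≤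
      ENNReal.ofReal (α t) * ewSq W (c t) + ENNReal.ofReal β)
    {M : ℝ} (hM : ∀ t ∈ Icc 0 T, ewSq W (c t) ≤ ENNReal.ofReal M)
    {A m : ℝ} (hA : (ewSq W (c 0)).toReal + β / ν * T ≤ A)
    (hm : (∫ t in (0 : ℝ)..T, α t) / ν ≤ m) :
    (∀ t ∈ Icc 0 T, ewSq W (c t) ≤ ENNReal.ofReal (A * Real.exp m)) ∧
      ∫⁻ t in Ioc 0 T, ewSq (fun k => W k * lam k) (c t) ≤
        ENNReal.ofReal (A * Real.exp m / ν) := by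
  set E : ℝ → ℝ := fun t => (ewSq W (c t)).toReal
  have hA0 : 0 ≤ A := le_trans (add_nonneg ENNReal.toReal_nonneg (by positivity)) hA
  have hα0' : ∀ t, 0 ≤ α t / ν := fun t => div_nonneg (hα0 t) hν.le
  have hαE := h.intervalIntegrable_mul_toReal_ewSq hT (hα.div_const ν) hM
  have henergy : ∀ t ∈ Icc 0 T, ∀ F : Finset Freq, (∑ k ∈ F, W k * ‖c t k‖ ^ 2) +
      ν * ∫ s in (0 : ℝ)..t, ∑ k ∈ F, W k * lam k * ‖c s k‖ ^ 2 ≤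
        A + ∫ s in (0 : ℝ)..t, α s / ν * E s := fun t ht F =>
    (h.sum_add_integral_le_add_integral_mul hν hW hα0 hα hβ hg hM ht F).trans (by gcongr)
  have hαE0 : ∀ t ∈ Icc 0 T, 0 ≤ ∫ s in (0 : ℝ)..t, α s / ν * E s := fun t ht =>
    intervalIntegral.integral_nonneg ht.1 fun s _ => mul_nonneg (hα0' s) ENNReal.toReal_nonneg
  have hE : ∀ t ∈ Icc 0 T, E t ≤ A + ∫ s in (0 : ℝ)..t, α s / ν * E s := fun t ht => by
    refine ENNReal.toReal_le_of_le_ofReal (add_nonneg hA0 (hαE0 t ht))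
      (ewSq_le_ofReal_of_sum_le hW fun F => le_trans ?_ (henergy t ht F))
    have hdiss : 0 ≤ ∫ s in (0 : ℝ)..t, ∑ k ∈ F, W k * lam k * ‖c s k‖ ^ 2 :=
      intervalIntegral.integral_nonneg ht.1 fun s _ => Finset.sum_nonneg fun k _ =>
        mul_nonneg (mul_nonneg (hW k) (lam_pos k).le) (sq_nonneg _)
    linarith [mul_nonneg hν.le hdiss]
  have hgronwall := add_integral_le_mul_exp_integral_of_le_add_integral hT (hα.div_const ν) hαE
    (fun t _ => hα0' t) hE
  refine h.ewSq_le_and_lintegral_le hT hν hW fun t ht F => (henergy t ht F).trans ?_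
  calc A + ∫ s in (0 : ℝ)..t, α s / ν * E s ≤ A + ∫ s in (0 : ℝ)..T, α s / ν * E s :=
        add_le_add_right (intervalIntegral.integral_mono_interval le_rfl ht.1 ht.2
          (.of_forall fun s => mul_nonneg (hα0' s) ENNReal.toReal_nonneg) hαE) A
    _ ≤ A * Real.exp (∫ s in (0 : ℝ)..T, α s / ν) := hgronwall
    _ ≤ A * Real.exp m := by
        rw [intervalIntegral.integral_div]
        gcongr

end IsHeatSol

end EnergyMethod

section Solutions

lemma exists_forall_le_of_isCompact {X : Type*} [TopologicalSpace X] {S : Set X}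
    (hS : IsCompact S) {φ : X → ℝ}
    (h : ∀ x ∈ S, ∃ M, ∀ᶠ y in nhdsWithin x S, φ y ≤ M) : ∃ M, ∀ x ∈ S, φ x ≤ M := by
  refine hS.induction_on (p := fun U => ∃ M, ∀ x ∈ U, φ x ≤ M) ⟨0, by simp⟩ ?_ ?_ ?_
  · rintro U V hUV ⟨M, hM⟩
    exact ⟨M, fun x hx => hM x (hUV hx)⟩
  · rintro U V ⟨M, hM⟩ ⟨M', hM'⟩
    exact ⟨max M M', fun x hx => hx.elim (fun hx => (hM x hx).trans (le_max_left _ _))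
      fun hx => (hM' x hx).trans (le_max_right _ _)⟩
  · intro x hx
    obtain ⟨M, hM⟩ := h x hx
    exact ⟨_, hM, M, fun _ hy => hy⟩

lemma norm_sq_le_hSq {α : ℝ} (hα : 0 ≤ α) {c : Coef} (hc : FinH α c) (k : Freq) :
    ‖c k‖ ^ 2 ≤ hSq α c :=
  (le_mul_of_one_le_left (sq_nonneg _) (Real.one_le_rpow (one_le_lam k) hα)).trans
    (hc.le_tsum k fun j _ => rpow_lam_mul_norm_sq_nonneg α c j)

lemma norm_le_hN {α : ℝ} (hα : 0 ≤ α) {c : Coef} (hc : FinH α c) (k : Freq) :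
    ‖c k‖ ≤ hN α c := Real.le_sqrt_of_sq_le (norm_sq_le_hSq hα hc k)

lemma hSq_le_two_mul_add {α : ℝ} {c d : Coef} (hc : FinH α c) (hd : FinH α d) :
    hSq α c ≤ 2 * (hSq α (c - d) + hSq α d) := by
  have hcd : Summable fun k => lam k ^ α * ‖(c - d) k‖ ^ 2 := hc.sub hd
  unfold hSq
  rw [← hcd.tsum_add hd, ← tsum_mul_left]
  refine hc.tsum_le_tsum (fun k => ?_) ((hcd.add hd).mul_left 2)
  have hnorm : ‖c k‖ ^ 2 ≤ 2 * (‖(c - d) k‖ ^ 2 + ‖d k‖ ^ 2) :=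
    (pow_le_pow_left₀ (norm_nonneg _) (norm_le_norm_sub_add (c k) (d k)) 2).trans
      add_sq_le
  linarith [mul_le_mul_of_nonneg_left hnorm (lam_rpow_pos k α).le]

lemma continuousOn_of_contH {α T : ℝ} (hα : 0 ≤ α) {u : ℝ → Coef} (hu : ContH α T u)
    (hfin : ∀ t ∈ Icc 0 T, FinH α (u t)) (k : Freq) : ContinuousOn (fun t => u t k) (Icc 0 T) := by
  rw [Metric.continuousOn_iff]
  intro t ht ε hε
  obtain ⟨δ, hδ, h⟩ := hu t ht ε hε
  refine ⟨δ, hδ, fun s hs hst => ?_⟩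
  rw [dist_eq_norm]
  exact (norm_le_hN hα ((hfin s hs).sub (hfin t ht)) k).trans_lt (h s hs hst)

lemma exists_forall_hSq_le_of_contH {α T : ℝ} {u : ℝ → Coef} (hu : ContH α T u)
    (hfin : ∀ t ∈ Icc 0 T, FinH α (u t)) : ∃ M, ∀ t ∈ Icc 0 T, hSq α (u t) ≤ M := by
  refine exists_forall_le_of_isCompact isCompact_Icc fun t ht => ?_
  obtain ⟨δ, hδ, h⟩ := hu t ht 1 one_pos
  refine ⟨2 * (1 + hSq α (u t)), ?_⟩
  filter_upwards [self_mem_nhdsWithin, mem_nhdsWithin_of_mem_nhds (Metric.ball_mem_nhds t hδ)]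
    with s hs hst
  refine (hSq_le_two_mul_add (hfin s hs) (hfin t ht)).trans ?_
  rw [← hN_sq α (u s - u t)]
  gcongr
  exact pow_le_one₀ (Real.sqrt_nonneg _) (h s hs hst).le

lemma norm_Bc_self_le {M : ℝ} (hM : 0 ≤ M) {c : Coef} (h : ehSq 0 c ≤ ENNReal.ofReal M)
    (k : Freq) : ‖Bc c c k‖ ≤ √(lam k) * M := by
  have hconv : conv (emod c) (emod c) k.1 ≤ ENNReal.ofReal M := by
    rw [← ENNReal.pow_le_pow_left_iff two_ne_zero, sq (ENNReal.ofReal M)]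
    exact (conv_emod_sq_le c c k.1).trans (mul_le_mul' h h)
  rw [← ENNReal.ofReal_le_ofReal_iff (by positivity), ofReal_norm,
    ENNReal.ofReal_mul (Real.sqrt_nonneg _)]
  exact (enorm_Bc_le_conv c c k).trans (mul_le_mul' le_rfl hconv)

namespace IsNSSol

variable {ν T : ℝ} {f θ : Coef} {u : ℝ → Coef}

lemma finH_one (h : IsNSSol ν f T θ u) (hθ : FinH 1 θ) {t : ℝ} (ht : t ∈ Icc 0 T) :
    FinH 1 (u t) := by
  rcases ht.1.eq_or_lt with rfl | h0
  · exact h.init ▸ hθ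
  · exact (h.memL2H2.1 t ⟨h0, ht.2⟩).2.mono one_le_two

lemma exists_forall_ehSq_one_le (h : IsNSSol ν f T θ u) (hθ : FinH 1 θ) :
    ∃ M, 0 ≤ M ∧ ∀ t ∈ Icc 0 T, ehSq 1 (u t) ≤ ENNReal.ofReal M := by
  obtain ⟨M, hM⟩ := exists_forall_hSq_le_of_contH h.contH1 fun t ht => h.finH_one hθ ht
  refine ⟨max M 0, le_max_right _ _, fun t ht => ?_⟩
  rw [← ofReal_hSq (h.finH_one hθ ht)]
  exact ENNReal.ofReal_le_ofReal ((hM t ht).trans (le_max_left _ _))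

lemma isHeatSol (h : IsNSSol ν f T θ u) (hθ : FinH 1 θ) :
    IsHeatSol ν T u fun t => f - Bc (u t) (u t) where
  continuousOn := continuousOn_of_contH zero_le_one h.contH1 fun _ => h.finH_one hθ
  hasDerivAt k t ht := (h.deriv k t ht).congr_deriv <| by
    simp only [Pi.sub_apply]
    ring
  bounded k := by
    obtain ⟨M, hM0, hM⟩ := h.exists_forall_ehSq_one_le hθ
    refine ⟨‖f k‖ + √(lam k) * M, fun t ht => (norm_sub_le _ _).trans (add_le_add_right ?_ _)⟩
    exact norm_Bc_self_le hM0
      ((ehSq_mono zero_le_one _).trans (hM t (Ioc_subset_Icc_self ht))) k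

end IsNSSol

end Solutions

section Cancellation

lemma lamExt_neg (n : ℤ × ℤ) : lamExt (-n) = lamExt n := by simp [lamExt]

lemma lamExt_pos {n : ℤ × ℤ} (h : n ≠ 0) : 0 < lamExt n := lam_pos ⟨n, h⟩

/-- The dot product `m·n` of lattice vectors. -/
def latticeDot (m n : ℤ × ℤ) : ℝ := (m.1 : ℝ) * n.1 + (m.2 : ℝ) * n.2

/-- The cross product `m^⊥·n` of lattice vectors, with `m^⊥ = (m₂, -m₁)`. -/
def latticeCross (m n : ℤ × ℤ) : ℝ := (m.2 : ℝ) * n.1 - (m.1 : ℝ) * n.2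

/-- Fourier coefficients of the stream function of the field `c`, normalised so that the field is
recovered by multiplication with `√λ_n`; the value at the origin is `0`. -/
def streamCoef (c : Coef) (n : ℤ × ℤ) : ℂ := zeroExt c n / (√(lamExt n) : ℂ)

lemma streamCoef_zero (c : Coef) : streamCoef c 0 = 0 := by simp [streamCoef, zeroExt_zero]

lemma streamCoef_mul_sqrt (c : Coef) (n : ℤ × ℤ) :
    streamCoef c n * (√(lamExt n) : ℂ) = zeroExt c n := by
  rcases eq_or_ne n 0 with rfl | h
  · simp [streamCoef_zero, zeroExt_zero]
  · exact div_mul_cancel₀ _ (Complex.ofReal_ne_zero.2 (Real.sqrt_pos.2 (lamExt_pos h)).ne')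

lemma streamCoef_neg {c : Coef} (hc : IsReal c) (n : ℤ × ℤ) :
    streamCoef c (-n) = -(starRingEnd ℂ) (streamCoef c n) := by
  rcases eq_or_ne n 0 with rfl | h
  · simp [streamCoef_zero]
  · have hneg : zeroExt c (-n) = -(starRingEnd ℂ) (zeroExt c n) := by
      rw [zeroExt_of_ne c h, zeroExt_of_ne c (neg_ne_zero.2 h)]
      exact hc ⟨n, h⟩
    rw [streamCoef, streamCoef, hneg, lamExt_neg, map_div₀, Complex.conj_ofReal, neg_div]

/-- The trilinear product `ψ_m ψ_{k-m} ψ̄_k` of stream function coefficients. -/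
def streamTriple (c : Coef) (k m : ℤ × ℤ) : ℂ :=
  streamCoef c m * streamCoef c (k - m) * (starRingEnd ℂ) (streamCoef c k)

/-- The `(k,m)` term in the Fourier expansion of `⟨B[u,u], Au⟩`, up to a constant. -/
def velocityTerm (c : Coef) (k m : ℤ × ℤ) : ℂ :=
  streamTriple c k m * (lamExt k * (4 * Real.pi ^ 2 * latticeDot (k - m) k) * latticeCross m k : ℝ)

/-- The `(k,m)` term in the Fourier expansion of `∫ (u·∇ω) ω` for the vorticity `ω` of `u`, up to
a constant. -/
def vorticityTerm (c : Coef) (k m : ℤ × ℤ) : ℂ :=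
  streamTriple c k m * (lamExt k * lamExt (k - m) * latticeCross m k : ℝ)

lemma sqrt_lam_mul_bsymb {k m n : Freq} (h : n.1 = k.1 - m.1) :
    √(lam m) * √(lam n) * √(lam k) * bsymb k m n =
      2 * Real.pi * (4 * Real.pi ^ 2 * latticeDot n.1 k.1 * latticeCross m.1 k.1) := by
  have hm := (Real.sqrt_pos.2 (knormSq_pos m)).ne'
  have hn := (Real.sqrt_pos.2 (knormSq_pos n)).ne'
  have hk := (Real.sqrt_pos.2 (knormSq_pos k)).ne'
  have hcross : (m.1.2 : ℝ) * n.1.1 - m.1.1 * n.1.2 = latticeCross m.1 k.1 := by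
    simp only [latticeCross, h, Prod.fst_sub, Prod.snd_sub, Int.cast_sub]
    ring
  rw [← hcross]
  simp only [sqrt_lam, bsymb, evec, fvec, dotR, latticeDot]
  field_simp
  ring

lemma Bterm_mul_eq_velocityTerm (c : Coef) (k m : Freq) :
    Bterm c c k m * ((lam k : ℂ) * (starRingEnd ℂ) (c k)) =
      ((2 * Real.pi : ℝ) : ℂ) * velocityTerm c k.1 m.1 := by
  unfold Bterm
  split_ifs with h
  · have hcoef : ∀ n : Freq, c n = streamCoef c n.1 * (√(lam n) : ℂ) := fun n => by
      rw [← lamExt_freq, streamCoef_mul_sqrt, zeroExt_freq]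
    have hsymb := congrArg (fun x : ℝ => (x : ℂ))
      (sqrt_lam_mul_bsymb (k := k) (m := m) (n := ⟨k.1 - m.1, h⟩) rfl)
    rw [hcoef m, hcoef k, hcoef ⟨k.1 - m.1, h⟩, velocityTerm, streamTriple, lamExt_freq, map_mul,
      Complex.conj_ofReal]
    push_cast at hsymb ⊢
    linear_combination streamCoef c m.1 * streamCoef c (k.1 - m.1) *
      (starRingEnd ℂ) (streamCoef c k.1) * (lam k : ℂ) * hsymb
  · rw [not_not] at h
    simp [velocityTerm, streamTriple, h, streamCoef_zero]

lemma abs_latticeCross_le (k m : ℤ × ℤ) :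
    |latticeCross m k| ≤ √(lamExt m) * √(lamExt (k - m)) := by
  have hpi : 1 ≤ 4 * Real.pi ^ 2 := by nlinarith [Real.pi_gt_three]
  have hle : ∀ n : ℤ × ℤ, latticeDot n n ≤ lamExt n := fun n => by
    rw [lamExt, latticeDot, ← sq, ← sq]
    exact le_mul_of_one_le_left (by positivity) hpi
  have hdot : ∀ n, 0 ≤ latticeDot n n := fun n =>
    add_nonneg (mul_self_nonneg _) (mul_self_nonneg _)
  rw [← Real.sqrt_mul (lamExt_nonneg _)]
  refine Real.abs_le_sqrt (le_trans ?_ (mul_le_mul (hle m) (hle (k - m)) (hdot _)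
    (lamExt_nonneg m)))
  simp only [latticeCross, latticeDot, Prod.fst_sub, Prod.snd_sub, Int.cast_sub]
  nlinarith [sq_nonneg ((m.1 : ℝ) * (k.1 - m.1) + (m.2 : ℝ) * (k.2 - m.2))]

lemma norm_vorticityTerm_le (c : Coef) (k m : ℤ × ℤ) :
    ‖vorticityTerm c k m‖ ≤ √(lamExt k) * ‖zeroExt c k‖ *
      (‖zeroExt c m‖ * (lamExt (k - m) * ‖zeroExt c (k - m)‖)) := by
  have hk := lamExt_nonneg k
  have hn := lamExt_nonneg (k - m)
  calc ‖vorticityTerm c k m‖ =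
        ‖streamTriple c k m‖ * (lamExt k * lamExt (k - m) * |latticeCross m k|) := by
        rw [vorticityTerm, norm_mul, Complex.norm_real, Real.norm_eq_abs, abs_mul, abs_mul,
          abs_of_nonneg hk, abs_of_nonneg hn]
    _ ≤ ‖streamTriple c k m‖ *
          (lamExt k * lamExt (k - m) * (√(lamExt m) * √(lamExt (k - m)))) := by
        gcongr
        exact abs_latticeCross_le k m
    _ = _ := by
        simp only [← streamCoef_mul_sqrt c, streamTriple, norm_mul, RCLike.norm_conj,
          Complex.norm_real, Real.norm_of_nonneg (Real.sqrt_nonneg _)]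
        linear_combination -‖streamCoef c m‖ * ‖streamCoef c (k - m)‖ * ‖streamCoef c k‖ *
          lamExt (k - m) * √(lamExt m) * √(lamExt (k - m)) * Real.sq_sqrt hk

lemma enorm_vorticityTerm_le (c : Coef) (k m : ℤ × ℤ) :
    ‖vorticityTerm c k m‖ₑ ≤
      wmod (fun n => √(lamExt n)) c k * (emod c m * wmod lamExt c (k - m)) := by
  simp only [wmod, emod, ← ofReal_norm, ← ENNReal.ofReal_mul (norm_nonneg _),
    ← ENNReal.ofReal_mul (Real.sqrt_nonneg _), ← ENNReal.ofReal_mul (lamExt_nonneg _)]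
  rw [← ENNReal.ofReal_mul (by positivity)]
  exact ENNReal.ofReal_le_ofReal (norm_vorticityTerm_le c k m)

lemma tsum_wmod_mul_conv_ne_top {c : Coef} (hc : FinH 2 c) :
    ∑' k, wmod (fun n => √(lamExt n)) c k * conv (emod c) (wmod lamExt c) k ≠ ⊤ := by
  have hc' := finH_iff_ehSq_ne_top.1 hc
  have hsqrt : ∑' n, wmod (fun n => √(lamExt n)) c n ^ 2 = ehSq 1 c := by
    simpa [Real.sqrt_eq_rpow] using tsum_wmod_rpow_sq (1 / 2) c
  have hid : ∑' n, wmod lamExt c n ^ 2 = ehSq 2 c := by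
    simpa using tsum_wmod_rpow_sq 1 c
  have hl1 : (∑' n, emod c n) ^ 2 ≤ invLamSqSum * ehSq 2 c := by
    simpa [wmod_one] using tsum_wmod_rpow_le 0 c
  refine fun htop => ENNReal.mul_ne_top (finH_iff_ehSq_ne_top.1 (hc.mono one_le_two))
    (ENNReal.mul_ne_top (ENNReal.mul_ne_top invLamSqSum_ne_top hc') hc') (top_unique ?_)
  calc ⊤ = (∑' k, wmod (fun n => √(lamExt n)) c k * conv (emod c) (wmod lamExt c) k) ^ 2 := by
        rw [htop, ENNReal.top_pow two_ne_zero]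
    _ ≤ ehSq 1 c * ∑' k, conv (emod c) (wmod lamExt c) k ^ 2 := hsqrt ▸ tsum_mul_sq_le _ _
    _ ≤ ehSq 1 c * (invLamSqSum * ehSq 2 c * ehSq 2 c) := by
        gcongr
        exact (tsum_conv_sq_le _ _).trans (mul_le_mul' hl1 hid.le)

lemma summable_vorticityTerm {c : Coef} (hc : FinH 2 c) :
    Summable fun p : (ℤ × ℤ) × (ℤ × ℤ) => vorticityTerm c p.1 p.2 := by
  have hfin : ∑' p : (ℤ × ℤ) × (ℤ × ℤ), ‖vorticityTerm c p.1 p.2‖ₑ ≠ ⊤ := by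
    refine ne_top_of_le_ne_top (tsum_wmod_mul_conv_ne_top hc) ?_
    rw [ENNReal.tsum_prod (f := fun k m => ‖vorticityTerm c k m‖ₑ)]
    refine ENNReal.tsum_le_tsum fun k => ?_
    rw [conv, ← ENNReal.tsum_mul_left]
    exact ENNReal.tsum_le_tsum (enorm_vorticityTerm_le c k)
  exact Summable.of_norm (by simpa using ENNReal.summable_toReal hfin)

lemma tsum_eq_zero_of_comp_equiv_eq_neg {ι : Type*} {F : ι → ℂ} (e : ι ≃ ι)
    (h : ∀ i, F (e i) = -F i) : ∑' i, F i = 0 := by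
  have hneg := e.tsum_eq F
  simp only [h, tsum_neg] at hneg
  exact self_eq_neg.1 hneg.symm

lemma tsum_vorticityTerm {c : Coef} (hr : IsReal c) (hc : FinH 2 c) :
    ∑' k, ∑' m, vorticityTerm c k m = 0 := by
  -- `k` and `k - m` index the two copies of the vorticity; the exchange `(k, m) ↦ (m - k, m)`
  -- swaps them up to conjugation and flips the sign of the cross product
  let e : (ℤ × ℤ) × (ℤ × ℤ) ≃ (ℤ × ℤ) × (ℤ × ℤ) :=
    { toFun := fun p => (p.2 - p.1, p.2)
      invFun := fun p => (p.2 - p.1, p.2)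
      left_inv := fun p => by simp
      right_inv := fun p => by simp }
  rw [← (summable_vorticityTerm hc).tsum_prod]
  refine tsum_eq_zero_of_comp_equiv_eq_neg e fun ⟨k, m⟩ => ?_
  change vorticityTerm c (m - k) m = -vorticityTerm c k m
  have hcross : latticeCross m (-(k - m)) = -latticeCross m k := by
    simp only [latticeCross, Prod.fst_sub, Prod.snd_sub, Prod.fst_neg, Prod.snd_neg,
      Int.cast_sub, Int.cast_neg]
    ring
  rw [vorticityTerm, vorticityTerm, streamTriple, streamTriple,
    show m - k - m = -k by abel, ← neg_sub k m, streamCoef_neg hr, streamCoef_neg hr, lamExt_neg,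
    lamExt_neg, hcross, map_neg, Complex.conj_conj]
  push_cast
  ring

lemma eq_zero_of_notMem_range_freq {n : ℤ × ℤ} (hn : n ∉ range fun k : Freq => k.1) : n = 0 :=
  by_contra fun h => hn ⟨⟨n, h⟩, rfl⟩

lemma velocityTerm_sub_vorticityTerm (c : Coef) (k m : ℤ × ℤ) :
    velocityTerm c k m - vorticityTerm c k m = streamTriple c k m *
      (lamExt k * (4 * Real.pi ^ 2) * (latticeDot (k - m) m * latticeCross m k) : ℝ) := by
  rw [velocityTerm, vorticityTerm, ← mul_sub, ← Complex.ofReal_sub]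
  congr 2
  simp only [lamExt, latticeDot, Prod.fst_sub, Prod.snd_sub, Int.cast_sub]
  ring

lemma tsum_velocityTerm_eq {c : Coef} (hc : FinH 2 c) (k : Freq) :
    ∑' m : Freq, velocityTerm c k.1 m.1 = ∑' m, vorticityTerm c k.1 m := by
  have h0 : FinH 0 c := hc.mono zero_le_two
  have hzero : velocityTerm c k.1 0 = 0 := by simp [velocityTerm, streamTriple, streamCoef_zero]
  have hfreq : Summable fun m : Freq => velocityTerm c k.1 m.1 := by
    have hB := (summable_Bterm h0 h0 k).mul_right ((lam k : ℂ) * (starRingEnd ℂ) (c k))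
    simp only [Bterm_mul_eq_velocityTerm] at hB
    exact (summable_mul_left_iff (Complex.ofReal_ne_zero.2 Real.two_pi_pos.ne')).1 hB
  have hvel : Summable (velocityTerm c k.1) :=
    (Subtype.val_injective.summable_iff fun n hn =>
      eq_zero_of_notMem_range_freq hn ▸ hzero).1 hfreq
  have hsymm : ∑' m, (velocityTerm c k.1 m - vorticityTerm c k.1 m) = 0 := by
    refine tsum_eq_zero_of_comp_equiv_eq_neg (Equiv.subLeft k.1) fun m => ?_
    have hanti : latticeDot m (k.1 - m) * latticeCross (k.1 - m) k.1 =
        -(latticeDot (k.1 - m) m * latticeCross m k.1) := by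
      simp only [latticeDot, latticeCross, Prod.fst_sub, Prod.snd_sub, Int.cast_sub]
      ring
    rw [Equiv.subLeft_apply, velocityTerm_sub_vorticityTerm, velocityTerm_sub_vorticityTerm,
      sub_sub_cancel, hanti, streamTriple, streamTriple, sub_sub_cancel]
    push_cast
    ring
  rw [hvel.tsum_sub ((summable_vorticityTerm hc).prod_factor k.1), sub_eq_zero] at hsymm
  exact (tsum_freq_eq hzero).trans hsymm

lemma hasSum_lam_mul_inner_Bc {c : Coef} (hr : IsReal c) (hc : FinH 2 c) :
    HasSum (fun k => lam k * inner ℝ (c k) (Bc c c k)) 0 := by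
  have hall : HasSum (fun k => ∑' m, vorticityTerm c k m) 0 :=
    tsum_vorticityTerm hr hc ▸ (summable_vorticityTerm hc).prod.hasSum
  have hfreq : HasSum (fun k : Freq => ∑' m, vorticityTerm c k.1 m) 0 := by
    refine (Subtype.val_injective.hasSum_iff fun n hn => ?_).2 hall
    simp [eq_zero_of_notMem_range_freq hn, vorticityTerm, streamTriple, streamCoef_zero]
  have hre := Complex.hasSum_re
    (hfreq.mul_left (((2 * Real.pi : ℝ) : ℂ) * Complex.I * ((2 * Real.pi : ℝ) : ℂ)))
  rw [mul_zero, Complex.zero_re] at hre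
  refine hre.congr_fun fun k => ?_
  rw [← tsum_velocityTerm_eq hc, mul_assoc, ← tsum_mul_left]
  simp only [← Bterm_mul_eq_velocityTerm]
  rw [tsum_mul_right, ← mul_assoc, ← Bc_eq_tsum, Complex.inner, mul_left_comm,
    Complex.re_ofReal_mul]

lemma tsum_lam_mul_enorm_mul_enorm_Bc_sq_le (c : Coef) :
    (∑' k : Freq, ENNReal.ofReal (lam k) * ‖c k‖ₑ * ‖Bc c c k‖ₑ) ^ 2 ≤
      invLamSqSum * ehSq 1 c * ehSq 2 c ^ 2 := by
  have hsqrt : ewSq (fun k => √(lamExt k.1) ^ 2) c = ehSq 1 c := by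
    simp only [lamExt_freq, Real.sq_sqrt (lam_pos _).le, ehSq, Real.rpow_one]
  have hB : ∑' k, ‖Bc c c k‖ₑ ^ 2 ≤ invLamSqSum * ehSq 2 c * ehSq 1 c :=
    calc _ ≤ ∑' k : Freq, conv (emod c) (wmod (fun n => √(lamExt n)) c) k.1 ^ 2 :=
          ENNReal.tsum_le_tsum fun k => pow_le_pow_left' (enorm_Bc_le_conv_wmod c c k) 2
      _ ≤ _ := by
        simpa [wmod_one, hsqrt] using
          tsum_conv_wmod_sq_le 0 (fun n => Real.sqrt_nonneg (lamExt n)) c c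
  have hA : ∑' k : Freq, (ENNReal.ofReal (lam k) * ‖c k‖ₑ) ^ 2 = ehSq 2 c :=
    tsum_congr fun k => by simp only [ofReal_mul_enorm_sq (lam_pos k).le, Real.rpow_two]
  calc _ ≤ _ := tsum_mul_sq_le _ _
    _ ≤ ehSq 2 c * (invLamSqSum * ehSq 2 c * ehSq 1 c) := mul_le_mul' hA.le hB
    _ = _ := by ring

end Cancellation

section Enstrophy

lemma norm_sum_lam_mul_inner_Bc_le {M : ℝ} (hM : 0 ≤ M) {c : Coef}
    (hcM : ehSq 1 c ≤ ENNReal.ofReal M) (hc : FinH 2 c) (F : Finset Freq) :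
    ‖∑ k ∈ F, lam k * inner ℝ (c k) (Bc c c k)‖ ≤ √(invLamSqSum.toReal * M) * hSq 2 c := by
  have hterm : ∀ k, ‖lam k * inner ℝ (c k) (Bc c c k)‖ₑ ≤
      ENNReal.ofReal (lam k) * ‖c k‖ₑ * ‖Bc c c k‖ₑ := fun k => by
    rw [enorm_mul, Real.enorm_of_nonneg (lam_pos k).le, mul_assoc]
    refine mul_le_mul' le_rfl ?_
    rw [← ofReal_norm, ← ofReal_norm, ← ofReal_norm, ← ENNReal.ofReal_mul (norm_nonneg _)]
    exact ENNReal.ofReal_le_ofReal (norm_inner_le_norm _ _)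
  have htsum : ‖∑ k ∈ F, lam k * inner ℝ (c k) (Bc c c k)‖ₑ ≤
      ∑' k, ENNReal.ofReal (lam k) * ‖c k‖ₑ * ‖Bc c c k‖ₑ :=
    ((enorm_sum_le _ _).trans (Finset.sum_le_sum fun k _ => hterm k)).trans (ENNReal.sum_le_tsum F)
  rw [← ENNReal.ofReal_le_ofReal_iff (by positivity [hSq_nonneg 2 c]), ofReal_norm,
    ← ENNReal.pow_le_pow_left_iff two_ne_zero]
  calc _ ≤ (∑' k, ENNReal.ofReal (lam k) * ‖c k‖ₑ * ‖Bc c c k‖ₑ) ^ 2 := by gcongr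
    _ ≤ invLamSqSum * ehSq 1 c * ehSq 2 c ^ 2 := tsum_lam_mul_enorm_mul_enorm_Bc_sq_le c
    _ ≤ ENNReal.ofReal (invLamSqSum.toReal * M) * ENNReal.ofReal (hSq 2 c) ^ 2 := by
      rw [ENNReal.ofReal_mul ENNReal.toReal_nonneg, ENNReal.ofReal_toReal invLamSqSum_ne_top,
        ofReal_hSq hc]
      gcongr
    _ = ENNReal.ofReal (√(invLamSqSum.toReal * M) * hSq 2 c) ^ 2 := by
      rw [ENNReal.ofReal_mul (Real.sqrt_nonneg _), mul_pow,
        ← ENNReal.ofReal_pow (Real.sqrt_nonneg _),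
        Real.sq_sqrt (mul_nonneg ENNReal.toReal_nonneg hM)]

namespace IsNSSol

variable {ν T : ℝ} {f θ : Coef} {u : ℝ → Coef}

lemma intervalIntegrable_sum_lam_mul_inner_Bc (h : IsNSSol ν f T θ u) (hθ : FinH 1 θ) {t : ℝ}
    (ht : t ∈ Icc 0 T) (F : Finset Freq) :
    IntervalIntegrable (fun s => ∑ k ∈ F, lam k * inner ℝ (u s k) (Bc (u s) (u s) k))
      volume 0 t := by
  have hinner : ∀ k,
      IntervalIntegrable (fun s => inner ℝ (u s k) (Bc (u s) (u s) k)) volume 0 t := fun k => by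
    have hcont : ContinuousOn (fun s => inner ℝ (u s k) (f k)) (uIcc 0 t) :=
      (((h.isHeatSol hθ).continuousOn k).mono
        (uIcc_of_le ht.1 ▸ Icc_subset_Icc_right ht.2)).inner continuousOn_const
    refine (hcont.intervalIntegrable.sub ((h.isHeatSol hθ).intervalIntegrable_inner ht k)).congr
      fun s _ => ?_
    simp only [Pi.sub_apply, inner_sub_right, sub_sub_cancel]
  simpa only [Finset.sum_fn] using
    IntervalIntegrable.sum F fun k _ => (hinner k).const_mul (lam k)

lemma sum_lam_add_integral_le (h : IsNSSol ν f T θ u) (hν : 0 < ν) (hθ : FinH 1 θ)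
    (hf : FinH 0 f) {t : ℝ} (ht : t ∈ Icc 0 T) (F : Finset Freq) :
    (∑ k ∈ F, lam k * ‖u t k‖ ^ 2) +
        ν * ∫ s in (0 : ℝ)..t, ∑ k ∈ F, lam k * lam k * ‖u s k‖ ^ 2 ≤
      hSq 1 θ + T * (hSq 0 f / ν) -
        2 * ∫ s in (0 : ℝ)..t, ∑ k ∈ F, lam k * inner ℝ (u s k) (Bc (u s) (u s) k) := by
  have hB := (h.intervalIntegrable_sum_lam_mul_inner_Bc hθ ht F).const_mul 2
  have hf_sum : ∑ k ∈ F, ‖f k‖ ^ 2 ≤ hSq 0 f := by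
    simpa [hSq] using hf.sum_le_tsum F fun k _ => rpow_lam_mul_norm_sq_nonneg 0 f k
  have hθ_sum : ∑ k ∈ F, lam k * ‖u 0 k‖ ^ 2 ≤ hSq 1 θ := by
    simpa [hSq, h.init] using hθ.sum_le_tsum F fun k _ => rpow_lam_mul_norm_sq_nonneg 1 θ k
  have hforce : ∀ s k, lam k * (2 * inner ℝ (u s k) ((f - Bc (u s) (u s)) k) -
      ν * lam k * ‖u s k‖ ^ 2) ≤
        ‖f k‖ ^ 2 / ν - 2 * (lam k * inner ℝ (u s k) (Bc (u s) (u s) k)) := fun s k => by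
    have hyoung := mul_le_mul_of_nonneg_left
      (two_mul_inner_sub_le (mul_pos hν (lam_pos k)) (u s k) (f k)) (lam_pos k).le
    have hlam : lam k * (‖f k‖ ^ 2 / (ν * lam k)) = ‖f k‖ ^ 2 / ν := by
      field_simp [(lam_pos k).ne']
    rw [Pi.sub_apply, inner_sub_right]
    linarith
  have hle := (h.isHeatSol hθ).sum_add_integral_le ht (W := lam) (F := F)
    (φ := fun s => hSq 0 f / ν - 2 * ∑ k ∈ F, lam k * inner ℝ (u s k) (Bc (u s) (u s) k))
    (intervalIntegrable_const.sub hB) <| .of_forall fun s => by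
      refine (Finset.sum_le_sum fun k _ => hforce s k).trans ?_
      rw [Finset.sum_sub_distrib, ← Finset.sum_div, ← Finset.mul_sum]
      gcongr
  rw [intervalIntegral.integral_sub intervalIntegrable_const hB,
    intervalIntegral.integral_const_mul, intervalIntegral.integral_const, sub_zero,
    smul_eq_mul] at hle
  have hT : t * (hSq 0 f / ν) ≤ T * (hSq 0 f / ν) :=
    mul_le_mul_of_nonneg_right ht.2 (div_nonneg (hSq_nonneg _ _) hν.le)
  linarith

lemma tendsto_integral_sum_lam_mul_inner_Bc (h : IsNSSol ν f T θ u) (hθ : FinH 1 θ) {t : ℝ}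
    (ht : t ∈ Icc 0 T) :
    Filter.Tendsto (fun F : Finset Freq => ∫ s in (0 : ℝ)..t,
      ∑ k ∈ F, lam k * inner ℝ (u s k) (Bc (u s) (u s) k)) Filter.atTop (nhds 0) := by
  obtain ⟨M, hM0, hM⟩ := h.exists_forall_ehSq_one_le hθ
  have hmem : ∀ s ∈ uIoc 0 t, s ∈ Ioc 0 T := fun s hs =>
    Ioc_subset_Ioc_right ht.2 (uIoc_of_le ht.1 ▸ hs)
  have hbound : IntervalIntegrable (fun s => √(invLamSqSum.toReal * M) * hSq 2 (u s))
      volume 0 t :=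
    ((intervalIntegrable_iff_integrableOn_Ioc_of_le ht.1).2
      (h.memL2H2.2.mono_set (Ioc_subset_Ioc_right ht.2))).const_mul _
  suffices hlim : Filter.Tendsto (fun F : Finset Freq => ∫ s in (0 : ℝ)..t,
      ∑ k ∈ F, lam k * inner ℝ (u s k) (Bc (u s) (u s) k)) Filter.atTop
      (nhds (∫ _ in (0 : ℝ)..t, (0 : ℝ))) by
    rwa [intervalIntegral.integral_zero] at hlim
  refine intervalIntegral.tendsto_integral_filter_of_dominated_convergence _
    (.of_forall fun F => ?_) (.of_forall fun F => .of_forall fun s hs => ?_) hbound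
    (.of_forall fun s hs => ?_)
  · rw [uIoc_of_le ht.1]
    exact (h.intervalIntegrable_sum_lam_mul_inner_Bc hθ ht F).1.aestronglyMeasurable
  · exact norm_sum_lam_mul_inner_Bc_le hM0 (hM s (Ioc_subset_Icc_self (hmem s hs)))
      (h.memL2H2.1 s (hmem s hs)).2 F
  · exact hasSum_lam_mul_inner_Bc (h.real s (Ioc_subset_Icc_self (hmem s hs)))
      (h.memL2H2.1 s (hmem s hs)).2

lemma ehSq_one_le_and_lintegral_ehSq_two_le (h : IsNSSol ν f T θ u) (hT : 0 ≤ T) (hν : 0 < ν)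
    (hθ : FinH 1 θ) (hf : FinH 0 f) :
    (∀ t ∈ Icc 0 T, ehSq 1 (u t) ≤ ENNReal.ofReal (hSq 1 θ + T * (hSq 0 f / ν))) ∧
      ∫⁻ t in Ioc 0 T, ehSq 2 (u t) ≤ ENNReal.ofReal ((hSq 1 θ + T * (hSq 0 f / ν)) / ν) := by
  have hbound := (h.isHeatSol hθ).ewSq_le_and_lintegral_le hT hν (W := lam)
    (fun k => (lam_pos k).le) (R := hSq 1 θ + T * (hSq 0 f / ν)) fun t ht F => by
      have hlim := ((h.tendsto_integral_sum_lam_mul_inner_Bc hθ ht).const_mul 2).const_sub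
        (hSq 1 θ + T * (hSq 0 f / ν))
      rw [mul_zero, sub_zero] at hlim
      refine ge_of_tendsto hlim ?_
      filter_upwards [Filter.eventually_ge_atTop F] with G hFG
      refine le_trans ?_ (h.sum_lam_add_integral_le hν hθ hf ht G)
      have hsum : ∀ s, ∑ k ∈ F, lam k * lam k * ‖u s k‖ ^ 2 ≤
          ∑ k ∈ G, lam k * lam k * ‖u s k‖ ^ 2 := fun s =>
        Finset.sum_le_sum_of_subset_of_nonneg hFG fun k _ _ =>
          mul_nonneg (mul_self_nonneg _) (sq_nonneg _)
      refine add_le_add (Finset.sum_le_sum_of_subset_of_nonneg hFG fun k _ _ =>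
        mul_nonneg (lam_pos k).le (sq_nonneg _)) (mul_le_mul_of_nonneg_left ?_ hν.le)
      exact intervalIntegral.integral_mono_on ht.1
        ((h.isHeatSol hθ).intervalIntegrable_sum ht _ F)
        ((h.isHeatSol hθ).intervalIntegrable_sum ht _ G) fun s _ => hsum s
  simpa only [ehSq, Real.rpow_one, Real.rpow_two, sq] using hbound

end IsNSSol

end Enstrophy

section Propagation

lemma tsum_le_of_forall_finset_eqOn {ι : Type*} {φ : ι → ℝ≥0∞} {X : ℝ≥0∞}
    (h : ∀ F : Finset ι, ∃ ψ : ι → ℝ≥0∞, EqOn ψ φ F ∧ ∑' i, ψ i ≤ X) : ∑' i, φ i ≤ X := by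
  rw [ENNReal.tsum_eq_iSup_sum]
  refine iSup_le fun F => ?_
  obtain ⟨ψ, hψ, hX⟩ := h F
  rw [← Finset.sum_congr rfl hψ]
  exact (ENNReal.sum_le_tsum F).trans hX

lemma ewSq_le_of_forall_finset_eqOn {W : Freq → ℝ} {c : Coef} {X : ℝ≥0∞}
    (h : ∀ F : Finset Freq, ∃ V : Freq → ℝ, EqOn V W F ∧ ewSq V c ≤ X) : ewSq W c ≤ X :=
  tsum_le_of_forall_finset_eqOn fun F => by
    obtain ⟨V, hV, hX⟩ := h F
    exact ⟨_, fun k hk => by simp only [hV hk], hX⟩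

lemma ewSq_mul_inv_lam_le_of_enorm_le {v : ℤ × ℤ → ℝ} (hv : ∀ n, 0 ≤ v n) {b : Coef}
    {Z : ℤ × ℤ → ℝ≥0∞} (h : ∀ k : Freq, ‖b k‖ₑ ≤ ENNReal.ofReal √(lam k) * Z k.1) :
    ewSq (fun k => v k.1 ^ 2 * (lam k)⁻¹) b ≤
      ∑' k : Freq, (ENNReal.ofReal (v k.1) * Z k.1) ^ 2 := by
  refine ENNReal.tsum_le_tsum fun k => ?_
  have hsqrt : 0 < √(lam k) := Real.sqrt_pos.2 (lam_pos k)
  have hweight : v k.1 ^ 2 * (lam k)⁻¹ = (v k.1 * (√(lam k))⁻¹) ^ 2 := by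
    rw [mul_pow, inv_pow, Real.sq_sqrt (lam_pos k).le]
  have hnonneg : 0 ≤ v k.1 * (√(lam k))⁻¹ := mul_nonneg (hv _) (inv_nonneg.2 hsqrt.le)
  calc ENNReal.ofReal (v k.1 ^ 2 * (lam k)⁻¹ * ‖b k‖ ^ 2)
      = (ENNReal.ofReal (v k.1 * (√(lam k))⁻¹) * ‖b k‖ₑ) ^ 2 := by
        rw [hweight, ofReal_mul_enorm_sq hnonneg]
    _ ≤ (ENNReal.ofReal (v k.1 * (√(lam k))⁻¹) * (ENNReal.ofReal √(lam k) * Z k.1)) ^ 2 := by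
        gcongr
        exact h k
    _ = (ENNReal.ofReal (v k.1) * Z k.1) ^ 2 := by
        rw [← mul_assoc, ← ENNReal.ofReal_mul hnonneg, inv_mul_cancel_right₀ hsqrt.ne']

namespace IsHeatSol

variable {ν T : ℝ} {c g : ℝ → Coef}

lemma lintegral_ewSq_le_of_forall_finset_eqOn (h : IsHeatSol ν T c g) {W : Freq → ℝ} {X : ℝ≥0∞}
    (hX : ∀ F : Finset Freq, ∃ V : Freq → ℝ, EqOn V W F ∧ ∫⁻ t in Ioc 0 T, ewSq V (c t) ≤ X) :
    ∫⁻ t in Ioc 0 T, ewSq W (c t) ≤ X := by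
  have htsum : ∀ V : Freq → ℝ, ∫⁻ t in Ioc 0 T, ewSq V (c t) =
      ∑' k, ∫⁻ t in Ioc 0 T, ENNReal.ofReal (V k * ‖c t k‖ ^ 2) := fun V =>
    lintegral_tsum (h.aemeasurable_term V)
  rw [htsum]
  refine tsum_le_of_forall_finset_eqOn fun F => ?_
  obtain ⟨V, hV, hVX⟩ := hX F
  exact ⟨_, fun k hk => by simp only [hV hk], htsum V ▸ hVX⟩

variable {α X : ℝ}

lemma ae_finH (h : IsHeatSol ν T c g)
    (hX : ∫⁻ t in Ioc 0 T, ehSq α (c t) ≤ ENNReal.ofReal X) :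
    ∀ᵐ t ∂volume.restrict (Ioc 0 T), FinH α (c t) := by
  filter_upwards [ae_lt_top' (h.aemeasurable_ewSq _) (ne_top_of_le_ne_top ENNReal.ofReal_ne_top hX)]
    with t ht using finH_iff_ehSq_ne_top.2 ht.ne

lemma intervalIntegrable_hSq (h : IsHeatSol ν T c g) (hT : 0 ≤ T)
    (hX : ∫⁻ t in Ioc 0 T, ehSq α (c t) ≤ ENNReal.ofReal X) :
    IntervalIntegrable (fun t => hSq α (c t)) volume 0 T := by
  simp only [intervalIntegrable_iff_integrableOn_Ioc_of_le hT, hSq_eq_toReal]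
  exact integrable_toReal_of_lintegral_ne_top (h.aemeasurable_ewSq _)
    (ne_top_of_le_ne_top ENNReal.ofReal_ne_top hX)

lemma integral_hSq_le (h : IsHeatSol ν T c g) (hT : 0 ≤ T) (hX0 : 0 ≤ X)
    (hX : ∫⁻ t in Ioc 0 T, ehSq α (c t) ≤ ENNReal.ofReal X) :
    ∫ t in (0 : ℝ)..T, hSq α (c t) ≤ X := by
  simp only [intervalIntegral.integral_of_le hT, hSq_eq_toReal, ehSq] at hX ⊢
  rw [integral_toReal (h.aemeasurable_ewSq _)
    (ae_lt_top' (h.aemeasurable_ewSq _) (ne_top_of_le_ne_top ENNReal.ofReal_ne_top hX))]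
  exact ENNReal.toReal_le_of_le_ofReal hX0 hX

end IsHeatSol

/-- The weight `x ^ s` with all but one power of `x` cut off at height `N`. At `x = λ_k` it is
dominated by a multiple of `λ_k`, so that the corresponding energy is finite along a strong
solution, and it is still doubling, uniformly in `N`. -/
def truncWeight (s N x : ℝ) : ℝ := x * min x N ^ (s - 1)

section TruncWeight

variable {s N x y : ℝ}

lemma truncWeight_nonneg (hN : 0 ≤ N) (hx : 0 ≤ x) : 0 ≤ truncWeight s N x :=
  mul_nonneg hx (Real.rpow_nonneg (le_min hx hN) _)

lemma truncWeight_le_truncWeight (hs : 1 ≤ s) (hN : 0 ≤ N) (hx : 0 ≤ x) (hxy : x ≤ y) :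
    truncWeight s N x ≤ truncWeight s N y :=
  mul_le_mul hxy
    (Real.rpow_le_rpow (le_min hx hN) (min_le_min_right N hxy) (sub_nonneg.2 hs))
    (Real.rpow_nonneg (le_min hx hN) _) (hx.trans hxy)

lemma truncWeight_eq_rpow (hx : 0 < x) (hxN : x ≤ N) : truncWeight s N x = x ^ s := by
  rw [truncWeight, min_eq_left hxN, Real.rpow_sub_one hx.ne', mul_div_cancel₀ _ hx.ne']

lemma truncWeight_mul_inv_le_rpow (hs : 1 ≤ s) (hN : 0 ≤ N) (hx : 0 < x) :
    truncWeight s N x * x⁻¹ ≤ x ^ (s - 1) := by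
  rw [truncWeight, mul_right_comm, mul_inv_cancel₀ hx.ne', one_mul]
  exact Real.rpow_le_rpow (le_min hx.le hN) (min_le_left _ _) (sub_nonneg.2 hs)

lemma truncWeight_le_rpow (hs : 1 ≤ s) (hN : 0 ≤ N) (hx : 0 < x) : truncWeight s N x ≤ x ^ s := by
  have h := mul_le_mul_of_nonneg_right (truncWeight_mul_inv_le_rpow hs hN hx) hx.le
  rwa [inv_mul_cancel_right₀ hx.ne', Real.rpow_sub_one hx.ne', div_mul_cancel₀ _ hx.ne'] at h

lemma truncWeight_le_rpow_mul (hs : 1 ≤ s) (hN : 0 ≤ N) (hx : 0 ≤ x) :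
    truncWeight s N x ≤ N ^ (s - 1) * x := by
  rw [mul_comm, truncWeight]
  exact mul_le_mul_of_nonneg_left
    (Real.rpow_le_rpow (le_min hx hN) (min_le_right _ _) (sub_nonneg.2 hs)) hx

lemma truncWeight_four_mul_le (hs : 1 ≤ s) (hN : 0 ≤ N) (hx : 0 ≤ x) :
    truncWeight s N (4 * x) ≤ 4 ^ s * truncWeight s N x := by
  have hmin : min (4 * x) N ≤ 4 * min x N := by
    rw [mul_min_of_nonneg _ _ (by norm_num)]
    exact min_le_min_left _ (by linarith)
  calc 4 * x * min (4 * x) N ^ (s - 1) ≤ 4 * x * (4 * min x N) ^ (s - 1) := by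
        gcongr
    _ = 4 ^ s * (x * min x N ^ (s - 1)) := by
        rw [Real.mul_rpow (by norm_num) (le_min hx hN), Real.rpow_sub_one (by norm_num)]
        ring

lemma sqrt_truncWeight_lamExt_add_le (hs : 1 ≤ s) (hN : 0 ≤ N) (m n : ℤ × ℤ) :
    √(truncWeight s N (lamExt (m + n))) ≤
      √(4 ^ s) * (√(truncWeight s N (lamExt m)) + √(truncWeight s N (lamExt n))) := by
  have hle : ∀ p, lamExt (m + n) ≤ 4 * lamExt p →
      √(truncWeight s N (lamExt (m + n))) ≤ √(4 ^ s) * √(truncWeight s N (lamExt p)) :=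
    fun p hp => by
      rw [← Real.sqrt_mul (by positivity)]
      exact Real.sqrt_le_sqrt
        ((truncWeight_le_truncWeight hs hN (lamExt_nonneg _) hp).trans
          (truncWeight_four_mul_le hs hN (lamExt_nonneg _)))
  rcases le_total (lamExt m) (lamExt n) with h | h
  · refine (hle n (by linarith [lamExt_add_le m n])).trans ?_
    gcongr
    exact le_add_of_nonneg_left (Real.sqrt_nonneg _)
  · refine (hle m (by linarith [lamExt_add_le m n])).trans ?_
    gcongr
    exact le_add_of_nonneg_right (Real.sqrt_nonneg _)

lemma ewSq_truncWeight_Bc_self_le (hs : 1 ≤ s) (hN : 0 ≤ N) (c : Coef) :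
    ewSq (fun k => truncWeight s N (lam k) * (lam k)⁻¹) (Bc c c) ≤
      ENNReal.ofReal (4 ^ s) * (4 * invLamSqSum) * ehSq 2 c *
        ewSq (fun k => truncWeight s N (lam k)) c := by
  have hsq : ∀ k : Freq, √(truncWeight s N (lamExt k.1)) ^ 2 = truncWeight s N (lam k) :=
    fun k => by rw [Real.sq_sqrt (truncWeight_nonneg hN (lamExt_nonneg _)), lamExt_freq]
  have hle := (ewSq_mul_inv_lam_le_of_enorm_le
    (v := fun n => √(truncWeight s N (lamExt n))) (fun _ => Real.sqrt_nonneg _)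
      (enorm_Bc_le_conv c c)).trans
    (tsum_ofReal_mul_conv_self_sq_le (v := fun n => √(truncWeight s N (lamExt n)))
      (fun _ => Real.sqrt_nonneg _) (Real.sqrt_nonneg (4 ^ s))
      (sqrt_truncWeight_lamExt_add_le hs hN) c)
  simpa only [hsq, ← ENNReal.ofReal_pow (Real.sqrt_nonneg _),
    Real.sq_sqrt (Real.rpow_nonneg (zero_le_four (α := ℝ)) s)] using hle

lemma ewSq_truncWeight_sub_Bc_self_le (hs : 1 ≤ s) (hN : 0 ≤ N) {f c : Coef}
    (hf : FinH (s - 1) f) (hc : FinH 2 c) :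
    ewSq (fun k => truncWeight s N (lam k) * (lam k)⁻¹) (f - Bc c c) ≤
      ENNReal.ofReal (2 * (4 ^ s * (4 * invLamSqSum.toReal)) * hSq 2 c) *
        ewSq (fun k => truncWeight s N (lam k)) c + ENNReal.ofReal (2 * hSq (s - 1) f) := by
  have hW : ∀ k, 0 ≤ truncWeight s N (lam k) * (lam k)⁻¹ := fun k =>
    mul_nonneg (truncWeight_nonneg hN (lam_pos k).le) (inv_nonneg.2 (lam_pos k).le)
  have hf_le : ewSq (fun k => truncWeight s N (lam k) * (lam k)⁻¹) f ≤ ehSq (s - 1) f :=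
    ewSq_mono (fun k => truncWeight_mul_inv_le_rpow hs hN (lam_pos k)) f
  refine (ewSq_sub_le hW f (Bc c c)).trans ((mul_le_mul' le_rfl
    (add_le_add hf_le (ewSq_truncWeight_Bc_self_le hs hN c))).trans_eq ?_)
  rw [ENNReal.ofReal_mul (by positivity), ENNReal.ofReal_mul (by positivity),
    ENNReal.ofReal_mul (by positivity), ENNReal.ofReal_mul (by positivity),
    ENNReal.ofReal_mul (by positivity), ENNReal.ofReal_toReal invLamSqSum_ne_top,
    ofReal_hSq hf, ofReal_hSq hc]
  simp only [ENNReal.ofReal_ofNat]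
  ring

end TruncWeight

namespace IsNSSol

variable {ν T : ℝ} {f θ : Coef} {u : ℝ → Coef}

lemma integral_hSq_two_le (h : IsNSSol ν f T θ u) (hT : 0 ≤ T) (hν : 0 < ν) (hθ : FinH 1 θ)
    (hf : FinH 0 f) :
    ∫ t in (0 : ℝ)..T, hSq 2 (u t) ≤ (hSq 1 θ + T * (hSq 0 f / ν)) / ν := by
  have hθ0 := hSq_nonneg 1 θ
  have hf0 := hSq_nonneg 0 f
  exact (h.isHeatSol hθ).integral_hSq_le hT (by positivity)
    (h.ehSq_one_le_and_lintegral_ehSq_two_le hT hν hθ hf).2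

lemma exists_ewSq_truncWeight_le (hT : 0 ≤ T) (hν : 0 < ν) {s : ℝ} (hs : 1 ≤ s)
    (hf : FinH (s - 1) f) {R : ℝ} (hR : 0 ≤ R) :
    ∃ X, 0 ≤ X ∧ ∀ N θ u, 0 ≤ N → FinH s θ → hSq s θ ≤ R → IsNSSol ν f T θ u →
      (∀ t ∈ Icc 0 T, ewSq (fun k => truncWeight s N (lam k)) (u t) ≤ ENNReal.ofReal X) ∧
        ∫⁻ t in Ioc 0 T, ewSq (fun k => truncWeight s N (lam k) * lam k) (u t) ≤
          ENNReal.ofReal (X / ν) := by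
  have hf0 : FinH 0 f := hf.mono (sub_nonneg.2 hs)
  have hfs := hSq_nonneg (s - 1) f
  set K : ℝ := 2 * (4 ^ s * (4 * invLamSqSum.toReal))
  have hK : 0 ≤ K := by positivity
  set m : ℝ := K * ((R + T * (hSq 0 f / ν)) / ν) / ν
  refine ⟨(R + 2 * hSq (s - 1) f / ν * T) * Real.exp m, by positivity,
    fun N θ u hN hθ hθR h => ?_⟩
  have hθ1 : FinH 1 θ := hθ.mono hs
  have hθ1R : hSq 1 θ ≤ R := (hSq_mono hs hθ).trans hθR
  have hheat := h.isHeatSol hθ1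
  obtain ⟨hH1, hH2⟩ := h.ehSq_one_le_and_lintegral_ehSq_two_le hT hν hθ1 hf0
  refine hheat.ewSq_le_and_lintegral_le_of_forcing_le hT hν
    (fun k => truncWeight_nonneg hN (lam_pos k).le) (α := fun t => K * hSq 2 (u t))
    (β := 2 * hSq (s - 1) f) (M := N ^ (s - 1) * (hSq 1 θ + T * (hSq 0 f / ν)))
    (fun t => mul_nonneg hK (hSq_nonneg _ _)) ((hheat.intervalIntegrable_hSq hT hH2).const_mul K)
    (by positivity) ?_ (fun t ht => ?_) ?_ ?_
  · filter_upwards [ae_restrict_mem measurableSet_Ioc] with t ht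
    exact ewSq_truncWeight_sub_Bc_self_le hs hN hf (h.memL2H2.1 t ht).2
  · refine (ewSq_mono (fun k => truncWeight_le_rpow_mul hs hN (lam_pos k).le) _).trans ?_
    rw [ewSq_const_mul (Real.rpow_nonneg hN _), ENNReal.ofReal_mul (Real.rpow_nonneg hN _)]
    exact mul_le_mul' le_rfl (by simpa only [ehSq, Real.rpow_one] using hH1 t ht)
  · rw [h.init]
    refine add_le_add_left (ENNReal.toReal_le_of_le_ofReal hR ?_) _
    exact (ewSq_mono (fun k => truncWeight_le_rpow hs hN (lam_pos k)) θ).trans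
      ((ofReal_hSq hθ).symm.trans_le (ENNReal.ofReal_le_ofReal hθR))
  · rw [intervalIntegral.integral_const_mul]
    exact div_le_div_of_nonneg_right (mul_le_mul_of_nonneg_left
      ((h.integral_hSq_two_le hT hν hθ1 hf0).trans (by gcongr)) hK) hν.le

lemma exists_ehSq_le_and_lintegral_ehSq_le (hT : 0 ≤ T) (hν : 0 < ν) {s : ℝ} (hs : 1 ≤ s)
    (hf : FinH (s - 1) f) {R : ℝ} (hR : 0 ≤ R) :
    ∃ X, 0 ≤ X ∧ ∀ θ u, FinH s θ → hSq s θ ≤ R → IsNSSol ν f T θ u →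
      (∀ t ∈ Icc 0 T, ehSq s (u t) ≤ ENNReal.ofReal X) ∧
        ∫⁻ t in Ioc 0 T, ehSq (s + 1) (u t) ≤ ENNReal.ofReal (X / ν) := by
  obtain ⟨X, hX0, hX⟩ := exists_ewSq_truncWeight_le hT hν hs hf hR
  have htrunc : ∀ F : Finset Freq, ∃ N, 0 ≤ N ∧ ∀ k ∈ F, truncWeight s N (lam k) = lam k ^ s :=
    fun F => ⟨∑ k ∈ F, lam k, Finset.sum_nonneg fun k _ => (lam_pos k).le, fun k hk =>
      truncWeight_eq_rpow (lam_pos k) (Finset.single_le_sum (fun j _ => (lam_pos j).le) hk)⟩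
  refine ⟨X, hX0, fun θ u hθ hθR h => ⟨fun t ht => ?_, ?_⟩⟩
  · refine ewSq_le_of_forall_finset_eqOn fun F => ?_
    obtain ⟨N, hN, hNF⟩ := htrunc F
    exact ⟨_, hNF, (hX N θ u hN hθ hθR h).1 t ht⟩
  · refine (h.isHeatSol (hθ.mono hs)).lintegral_ewSq_le_of_forall_finset_eqOn fun F => ?_
    obtain ⟨N, hN, hNF⟩ := htrunc F
    refine ⟨_, fun k hk => ?_, (hX N θ u hN hθ hθR h).2⟩
    simp only [hNF k hk, Real.rpow_add_one (lam_pos k).ne']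

end IsNSSol

end Propagation

section Difference

lemma exists_ewSq_Bc_sub_Bc_le {a r : ℝ} (h : |a| + 2 ≤ r ∨ 2 ≤ |a| ∧ |a| ≤ r) :
    ∃ C, 0 ≤ C ∧ ∀ c c' : Coef, FinH r c → FinH r c' →
      ewSq (fun k => lam k ^ a * (lam k)⁻¹) (Bc c' c' - Bc c c) ≤
        ENNReal.ofReal (C * (hSq r c + hSq r c')) * ehSq a (c - c') := by
  obtain ⟨C, hC, hprod⟩ := exists_tsum_rpow_mul_conv_sq_le h
  have hr : 0 ≤ r := by rcases h with h | h <;> linarith [abs_nonneg a]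
  refine ⟨2 * C.toReal, by positivity, fun c c' hc hc' => ?_⟩
  have hc0 := hc.mono hr
  have hc0' := hc'.mono hr
  have hsq : ∀ k : Freq, (lam k ^ (a / 2)) ^ 2 = lam k ^ a := fun k => by
    rw [← Real.rpow_mul_natCast (lam_pos k).le]
    norm_num
  have hB : ∀ k, ‖(Bc c' c' - Bc c c) k‖ₑ ≤ ENNReal.ofReal √(lam k) *
      (conv (emod c) (emod (c - c')) k.1 + conv (emod c') (emod (c - c')) k.1) := fun k => by
    rw [Pi.sub_apply, enorm_sub_rev, conv_comm (emod c')]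
    exact enorm_Bc_sub_Bc_le hc0 hc0 hc0' hc0' k
  have hle := ewSq_mul_inv_lam_le_of_enorm_le (v := fun n => lamExt n ^ (a / 2))
    (Z := fun n => conv (emod c) (emod (c - c')) n + conv (emod c') (emod (c - c')) n)
    (fun n => Real.rpow_nonneg (lamExt_nonneg n) _) hB
  simp only [lamExt_freq, hsq] at hle
  calc _ ≤ _ := hle
    _ ≤ ∑' k : Freq, 2 * ((ENNReal.ofReal (lam k ^ (a / 2)) *
            conv (emod c) (emod (c - c')) k.1) ^ 2 +
          (ENNReal.ofReal (lam k ^ (a / 2)) * conv (emod c') (emod (c - c')) k.1) ^ 2) :=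
        ENNReal.tsum_le_tsum fun k => by
          rw [mul_add]
          exact add_sq_le_two_mul _ _
    _ ≤ 2 * (C * (ehSq r c * ehSq a (c - c')) + C * (ehSq r c' * ehSq a (c - c'))) := by
        rw [ENNReal.tsum_mul_left, ENNReal.tsum_add]
        gcongr <;> apply hprod
    _ = ENNReal.ofReal (2 * C.toReal * (hSq r c + hSq r c')) * ehSq a (c - c') := by
        rw [ENNReal.ofReal_mul (by positivity), ENNReal.ofReal_mul two_pos.le,
          ENNReal.ofReal_add (hSq_nonneg _ _) (hSq_nonneg _ _), ENNReal.ofReal_toReal hC,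
          ofReal_hSq hc, ofReal_hSq hc', ENNReal.ofReal_ofNat]
        ring

lemma IsNSSol.isHeatSol_sub {ν T : ℝ} {f θ θ' : Coef} {u u' : ℝ → Coef}
    (h : IsNSSol ν f T θ u) (h' : IsNSSol ν f T θ' u') (hθ : FinH 1 θ) (hθ' : FinH 1 θ') :
    IsHeatSol ν T (u - u') fun t => Bc (u' t) (u' t) - Bc (u t) (u t) := by
  convert (h.isHeatSol hθ).sub (h'.isHeatSol hθ') using 1
  ext1 t
  simp only [Pi.sub_apply, sub_sub_sub_cancel_left]

lemma exists_ehSq_sub_le_and_lintegral_le {a s : ℝ} (has : a ≤ s)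
    (h : |a| + 1 ≤ s ∨ 2 ≤ |a| ∧ |a| ≤ s + 1) {T ν : ℝ} (hT : 0 ≤ T) (hν : 0 < ν) {f : Coef}
    (hf : FinH (s - 1) f) {R : ℝ} (hR : 0 ≤ R) :
    ∃ E, 0 < E ∧ ∀ (θ θ' : Coef) (u u' : ℝ → Coef), FinH s θ → FinH s θ' →
      hSq s θ ≤ R → hSq s θ' ≤ R → IsNSSol ν f T θ u → IsNSSol ν f T θ' u' →
        (∀ t ∈ Icc 0 T, ehSq a (u t - u' t) ≤ ENNReal.ofReal (hSq a (θ - θ') * E)) ∧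
          ∫⁻ t in Ioc 0 T, ehSq (a + 1) (u t - u' t) ≤
            ENNReal.ofReal (hSq a (θ - θ') * E / ν) := by
  have hs : 1 ≤ s := by rcases h with h | h <;> linarith [abs_nonneg a]
  obtain ⟨X, hX0, hX⟩ := IsNSSol.exists_ehSq_le_and_lintegral_ehSq_le hT hν hs hf hR
  obtain ⟨C, hC0, hC⟩ := exists_ewSq_Bc_sub_Bc_le (a := a) (r := s + 1)
    (h.imp_left fun h => by linarith)
  refine ⟨_, Real.exp_pos (C * (X / ν + X / ν) / ν),
    fun θ θ' u u' hθ hθ' hθR hθR' hu hu' => ?_⟩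
  obtain ⟨hsup, hlint⟩ := hX θ u hθ hθR hu
  obtain ⟨hsup', hlint'⟩ := hX θ' u' hθ' hθR' hu'
  have hheat := hu.isHeatSol (hθ.mono hs)
  have hheat' := hu'.isHeatSol (hθ'.mono hs)
  have hint := hheat.intervalIntegrable_hSq hT hlint
  have hint' := hheat'.intervalIntegrable_hSq hT hlint'
  have henergy := (hu.isHeatSol_sub hu' (hθ.mono hs)
    (hθ'.mono hs)).ewSq_le_and_lintegral_le_of_forcing_le hT hν
    (fun k => (lam_rpow_pos k a).le)
    (α := fun t => C * (hSq (s + 1) (u t) + hSq (s + 1) (u' t)))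
    (fun t => mul_nonneg hC0 (add_nonneg (hSq_nonneg _ _) (hSq_nonneg _ _)))
    ((hint.add hint').const_mul C) (β := 0) le_rfl
    (M := 2 * (X + X)) (A := hSq a (θ - θ')) (m := C * (X / ν + X / ν) / ν)
    ?_ (fun t ht => ?_) ?_ ?_
  · simpa only [ehSq, Real.rpow_add_one (lam_pos _).ne', Pi.sub_apply] using henergy
  · filter_upwards [hheat.ae_finH hlint, hheat'.ae_finH hlint'] with t ht ht'
    rw [ENNReal.ofReal_zero, add_zero]
    exact hC _ _ ht ht'
  · rw [ENNReal.ofReal_mul two_pos.le, ENNReal.ofReal_add hX0 hX0, ENNReal.ofReal_ofNat]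
    refine (ehSq_mono has _).trans ((ewSq_sub_le (fun k => (lam_rpow_pos k s).le) _ _).trans ?_)
    exact mul_le_mul' le_rfl (add_le_add (hsup t ht) (hsup' t ht))
  · simp only [Pi.sub_apply, hu.init, hu'.init, zero_div, zero_mul, add_zero]
    exact (hSq_eq_toReal a (θ - θ')).ge
  · rw [intervalIntegral.integral_const_mul, intervalIntegral.integral_add hint hint']
    gcongr
    · exact hheat.integral_hSq_le hT (by positivity) hlint
    · exact hheat'.integral_hSq_le hT (by positivity) hlint'

end Difference

theorem statement3_general {a s : ℝ} (has : a ≤ s) (h : |a| + 1 ≤ s ∨ 2 ≤ |a| ∧ |a| ≤ s + 1)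
    {T ν : ℝ} (hT : 0 ≤ T) (hν : 0 < ν) {f : Coef} (hf : FinH (s - 1) f) (B : ℝ) :
    ∃ K : ℝ, 0 < K ∧
      ∀ (θ θ' : Coef) (u u' : ℝ → Coef), FinH s θ → FinH s θ' → hN s θ + hN s θ' ≤ B →
        IsNSSol ν f T θ u → IsNSSol ν f T θ' u' →
          IntervalIntegrable (fun t => hSq (a + 1) (u t - u' t)) volume 0 T ∧
          ∀ t ∈ Icc (0 : ℝ) T,
            hSq a (u t - u' t) + (∫ τ in (0 : ℝ)..T, hSq (a + 1) (u τ - u' τ)) ≤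
              K * hSq a (θ - θ') := by
  obtain ⟨E, hE, hEbound⟩ := exists_ehSq_sub_le_and_lintegral_le has h hT hν hf (sq_nonneg B)
  refine ⟨E * (1 + 1 / ν), by positivity, fun θ θ' u u' hθ hθ' hB hu hu' => ?_⟩
  have hs : 1 ≤ s := by rcases h with h | h <;> linarith [abs_nonneg a]
  have hA := mul_nonneg (hSq_nonneg a (θ - θ')) hE.le
  have hsq : ∀ {c : Coef}, hN s c ≤ B → hSq s c ≤ B ^ 2 := fun hc =>
    hN_sq s _ ▸ pow_le_pow_left₀ (Real.sqrt_nonneg _) hc 2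
  have hθB : hN s θ ≤ B := (le_add_of_nonneg_right (Real.sqrt_nonneg _)).trans hB
  have hθB' : hN s θ' ≤ B := (le_add_of_nonneg_left (Real.sqrt_nonneg _)).trans hB
  obtain ⟨hsup, hlint⟩ := hEbound θ θ' u u' hθ hθ' (hsq hθB) (hsq hθB') hu hu'
  have hheat := hu.isHeatSol_sub hu' (hθ.mono hs) (hθ'.mono hs)
  refine ⟨hheat.intervalIntegrable_hSq hT hlint, fun t ht => ?_⟩
  have hsup_t : hSq a (u t - u' t) ≤ hSq a (θ - θ') * E := by
    rw [hSq_eq_toReal a (u t - u' t)]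
    exact ENNReal.toReal_le_of_le_ofReal hA (hsup t ht)
  calc _ ≤ hSq a (θ - θ') * E + hSq a (θ - θ') * E / ν :=
        add_le_add hsup_t (hheat.integral_hSq_le hT (div_nonneg hA hν.le) hlint)
    _ = E * (1 + 1 / ν) * hSq a (θ - θ') := by ring

lemma astar_eq_or (a : ℤ) : astar a = |a| + 1 ∨ 2 ≤ |a| ∧ astar a = |a| := by
  unfold astar
  split_ifs <;> omega

/-- Proposition `PropNSLip`. Lipschitz continuity of the
Navier–Stokes solution map in the `Ḣ^a`-scale: for `a ∈ ℤ`, with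
`a* = |a|+1` if `|a| ≤ 1` and `a* = |a|` if `|a| ≥ 2`, any `f ∈ Ḣ^{a*−1}_⋄`
and `B > 0`, there is `K > 0` such that for all `θ, θ' ∈ Ḣ^{a*}_⋄` with
`‖θ‖_{Ḣ^{a*}} + ‖θ'‖_{Ḣ^{a*}} ≤ B`,
`sup_{0≤t≤T} ‖u_θ(t) − u_{θ'}(t)‖²_{Ḣ^a} + ∫₀ᵀ ‖u_θ − u_{θ'}‖²_{Ḣ^{a+1}} dt
  ≤ K ‖θ − θ'‖²_{Ḣ^a}`. -/
theorem statement3 (a : ℤ) (T ν : ℝ) (hT : 0 < T) (hν : 0 < ν)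
    (f : Coef) (hf : MemH ((astar a : ℝ) - 1) f) (B : ℝ) (hB : 0 < B) :
    ∃ K : ℝ, 0 < K ∧
      ∀ (θ θ' : Coef) (u u' : ℝ → Coef),
        MemH (astar a : ℝ) θ → MemH (astar a : ℝ) θ' →
        hN (astar a : ℝ) θ + hN (astar a : ℝ) θ' ≤ B →
        IsNSSol ν f T θ u → IsNSSol ν f T θ' u' →
          IntervalIntegrable (fun t => hSq ((a : ℝ) + 1) (u t - u' t)) volume 0 T ∧
          ∀ t ∈ Icc (0:ℝ) T,
            hSq (a : ℝ) (u t - u' t) +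
              (∫ s in (0:ℝ)..T, hSq ((a : ℝ) + 1) (u s - u' s)) ≤
              K * hSq (a : ℝ) (θ - θ') := by
  have hcast : |(a : ℝ)| = ((|a| : ℤ) : ℝ) := Int.cast_abs.symm
  have has : (a : ℝ) ≤ astar a := by
    rcases astar_eq_or a with h | h <;> exact_mod_cast (by have := le_abs_self a; omega)
  have h : |(a : ℝ)| + 1 ≤ astar a ∨ 2 ≤ |(a : ℝ)| ∧ |(a : ℝ)| ≤ astar a + 1 := by
    rw [hcast]
    rcases astar_eq_or a with h | h
    · exact .inl (by exact_mod_cast h.ge)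
    · exact .inr ⟨by exact_mod_cast h.1, by exact_mod_cast (by omega)⟩
  obtain ⟨K, hK, hKbound⟩ := statement3_general has h hT.le hν hf.2 B
  exact ⟨K, hK, fun θ θ' u u' hθ hθ' => hKbound θ θ' u u' hθ.2 hθ'.2⟩

end NS2D
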